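/- For all trace-class-operator-valued Schwartz functions f ∈ S(ℝ^d×ℝ^d, L¹(H',H'')), g ∈ S(ℝ^d×ℝ^d, L¹(H,H')) and h ∈ S(ℝ^d×ℝ^d, L¹(H,H'')), with the sesquilinear pairings ⟨u,v⟩ := ∫ tr(u(X)* v(X)) dX (trace over the initial Hilbert space of the values of u and v), the following identities hold: ⟨f ♯ g, h⟩ = ⟨f, h ♯ g*⟩ = ⟨f, (g ♯ h*)*⟩ and ⟨f ♯ g, h⟩ = ⟨g, f* ♯ h⟩ = ⟨g, (h* ♯ f)*⟩, where u* denotes the pointwise Hilbert space adjoint u*(X) := u(X)*. -/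

import Mathlib

open MeasureTheory Complex SchwartzMap
open scoped Real ENNReal NNReal

set_option maxHeartbeats 1000000
set_option synthInstance.maxHeartbeats 1000000

noncomputable section

local notation "⟪" x ", " y "⟫_ℝ" => @inner ℝ _ _ x y
local notation "⟪" x ", " y "⟫_ℂ" => @inner ℂ _ _ x y

/-- Euclidean configuration space. -/
abbrev Ed (d : ℕ) : Type := EuclideanSpace ℝ (Fin d)

/-- Line integral of the vector potential `A` along the segment `[x, y]`. -/
def lineInt {d : ℕ} (A : Ed d → Ed d) (x y : Ed d) : ℝ :=
  ∫ s in (0:ℝ)..(1:ℝ), ⟪A (x + s • (y - x)), y - x⟫_ℝ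

/-- The phase `e^{-i(y-x)·η} e^{-i(λ/ε)Γ_A(εx,εy)}` of the magnetic Weyl quantization. -/
def wPhase {d : ℕ} (ε lam : ℝ) (A : Ed d → Ed d) (x y η : Ed d) : ℂ :=
  Complex.exp (-Complex.I * ((⟪y - x, η⟫_ℝ : ℝ) : ℂ)) *
    Complex.exp (-Complex.I * (((lam / ε) * lineInt A (ε • x) (ε • y) : ℝ) : ℂ))

/-- Magnetic Weyl quantization of an operator-valued symbol (absolutely convergent version,
with the momentum integral innermost, suitable for Schwartz-class symbols). -/
def opA {d : ℕ} {H H' : Type*} [NormedAddCommGroup H] [NormedSpace ℂ H]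
    [NormedAddCommGroup H'] [NormedSpace ℂ H']
    (ε lam : ℝ) (A : Ed d → Ed d) (f : Ed d × Ed d → (H →L[ℂ] H')) (Ψ : Ed d → H) :
    Ed d → H' :=
  fun x => (((2 * Real.pi) ^ d)⁻¹ : ℝ) •
    ∫ y : Ed d, ∫ η : Ed d, wPhase ε lam A x y η • f ((ε / 2) • (x + y), η) (Ψ y)

/-- Magnetic Weyl quantization as an (iterated, oscillatory) integral with the momentum
integral outermost; this realizes the oscillatory integral for Hörmander-class symbols. -/
def opW {d : ℕ} {H H' : Type*} [NormedAddCommGroup H] [NormedSpace ℂ H]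
    [NormedAddCommGroup H'] [NormedSpace ℂ H']
    (ε lam : ℝ) (A : Ed d → Ed d) (f : Ed d × Ed d → (H →L[ℂ] H')) (Ψ : Ed d → H) :
    Ed d → H' :=
  fun x => (((2 * Real.pi) ^ d)⁻¹ : ℝ) •
    ∫ η : Ed d, ∫ y : Ed d, wPhase ε lam A x y η • f ((ε / 2) • (x + y), η) (Ψ y)

/-- Directional derivative of a phase-space function. -/
def dirD {d : ℕ} {F : Type*} [NormedAddCommGroup F] [NormedSpace ℝ F]
    (v : Ed d × Ed d) (g : Ed d × Ed d → F) : Ed d × Ed d → F :=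
  fun p => fderiv ℝ g p v

/-- Directions corresponding to the multi-indices `a` (position) and `α` (momentum). -/
def mkDirs {d : ℕ} (a α : List (Fin d)) : List (Ed d × Ed d) :=
  (a.map fun j => ((EuclideanSpace.single j (1:ℝ) : Ed d), (0 : Ed d))) ++
    α.map fun j => ((0 : Ed d), (EuclideanSpace.single j (1:ℝ) : Ed d))

/-- The iterated partial derivative `∂_x^a ∂_ξ^α f`. -/
def mDeriv {d : ℕ} {F : Type*} [NormedAddCommGroup F] [NormedSpace ℝ F]
    (a α : List (Fin d)) (f : Ed d × Ed d → F) : Ed d × Ed d → F :=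
  (mkDirs a α).foldr dirD f

/-- The Japanese bracket `⟨ξ⟩ = (1+|ξ|²)^{1/2}`. -/
def jb {d : ℕ} (ξ : Ed d) : ℝ := Real.sqrt (1 + ‖ξ‖ ^ 2)

/-- Operator-valued Hörmander class `S^m_{ρ,δ}(B(H,H'))`. -/
structure IsHormander {d : ℕ} {H H' : Type*} [NormedAddCommGroup H] [NormedSpace ℂ H]
    [NormedAddCommGroup H'] [NormedSpace ℂ H'] (m ρ δ : ℝ)
    (f : Ed d × Ed d → (H →L[ℂ] H')) : Prop where
  smooth : ContDiff ℝ (⊤ : ℕ∞) f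
  bound : ∀ a α : List (Fin d), ∃ C : ℝ, ∀ p : Ed d × Ed d,
    ‖mDeriv a α f p‖ ≤ C * jb p.2 ^ (m - ρ * (α.length : ℝ) + δ * (a.length : ℝ))

/-- `A` is smooth with polynomially bounded derivatives of all orders. -/
def IsPolyVF {d : ℕ} (A : Ed d → Ed d) : Prop :=
  ContDiff ℝ (⊤ : ℕ∞) A ∧ ∀ n : ℕ, ∃ C : ℝ, ∃ k : ℕ, ∀ x, ‖iteratedFDeriv ℝ n A x‖ ≤ C * (1 + ‖x‖) ^ k

/-- Components `B_{jl} = ∂_j A_l − ∂_l A_j` of the magnetic field `B = dA`. -/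
def Bcomp {d : ℕ} (A : Ed d → Ed d) (x : Ed d) (j l : Fin d) : ℝ :=
  fderiv ℝ (fun z => A z l) x (EuclideanSpace.single j (1:ℝ)) -
    fderiv ℝ (fun z => A z j) x (EuclideanSpace.single l (1:ℝ))

/-- The magnetic field `B = dA` is bounded with bounded derivatives of all orders. -/
def IsBoundedField {d : ℕ} (A : Ed d → Ed d) : Prop :=
  ∀ (j l : Fin d) (n : ℕ), ∃ C : ℝ, ∀ x, ‖iteratedFDeriv ℝ n (fun z => Bcomp A z j l) x‖ ≤ C


/-- The trace norm of a bounded operator between Hilbert spaces, characterized as the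
supremum of `∑ |⟨v i, T (e i)⟩|` over finite orthonormal families. -/
def traceNormE {H H' : Type*} [NormedAddCommGroup H] [InnerProductSpace ℂ H]
    [NormedAddCommGroup H'] [InnerProductSpace ℂ H'] (T : H →L[ℂ] H') : ℝ≥0∞ :=
  ⨆ (n : ℕ) (e : Fin n → H) (v : Fin n → H') (_ : Orthonormal ℂ e) (_ : Orthonormal ℂ v),
    ENNReal.ofReal (∑ i, ‖⟪v i, T (e i)⟫_ℂ‖)

/-- `T` is a trace class operator. -/
def IsTraceClass {H H' : Type*} [NormedAddCommGroup H] [InnerProductSpace ℂ H]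
    [NormedAddCommGroup H'] [InnerProductSpace ℂ H'] (T : H →L[ℂ] H') : Prop :=
  traceNormE T < ⊤

/-- The trace of an operator on a Hilbert space (computed in some fixed Hilbert basis;
for trace class operators this is basis independent). -/
def trH {H : Type*} [NormedAddCommGroup H] [InnerProductSpace ℂ H] [CompleteSpace H]
    (T : H →L[ℂ] H) : ℂ :=
  ∑' i : (exists_hilbertBasis ℂ H).choose,
    ⟪((exists_hilbertBasis ℂ H).choose_spec.choose i : H),
      T ((exists_hilbertBasis ℂ H).choose_spec.choose i)⟫_ℂ

/-- `f` is a Schwartz function with values in the trace class operators `L¹(H,H')`: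
all of its derivatives decay, in trace norm, faster than any inverse polynomial. -/
def TCSchwartz {d : ℕ} {H H' : Type*} [NormedAddCommGroup H] [InnerProductSpace ℂ H]
    [NormedAddCommGroup H'] [InnerProductSpace ℂ H']
    (f : SchwartzMap (Ed d × Ed d) (H →L[ℂ] H')) : Prop :=
  (∀ X : Ed d × Ed d, IsTraceClass (f X)) ∧
    ∀ (k : ℕ) (a α : List (Fin d)), ∃ C : ℝ,
      ∀ X : Ed d × Ed d,
        ENNReal.ofReal ((1 + ‖X‖) ^ k) * traceNormE (mDeriv a α (⇑f) X) ≤ ENNReal.ofReal C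

/-- The sesquilinear pairing `⟨u,v⟩ = ∫ tr(u(X)* v(X)) dX` (trace over the initial space). -/
def tcPair {d : ℕ} {K K' : Type*} [NormedAddCommGroup K] [InnerProductSpace ℂ K]
    [CompleteSpace K] [NormedAddCommGroup K'] [InnerProductSpace ℂ K'] [CompleteSpace K']
    (u v : Ed d × Ed d → (K →L[ℂ] K')) : ℂ :=
  ∫ X : Ed d × Ed d, trH ((ContinuousLinearMap.adjoint (u X)).comp (v X))

/-!
`Op^A(u)` is the integral operator whose kernel `K_u` is a unimodular phase times the partial
Fourier transform of `u` in the momentum variable, in the linear coordinates `(ε(x+y)/2, y-x)`. By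
Plancherel `u ↦ K_u` is a multiple of an isometry for the Hilbert–Schmidt pairings, it turns `♯`
into composition of kernels, and `K_{u*}(x, y) = K_u(y, x)*`. With the operator values expanded in
Hilbert bases, the identities become `∫ (F ∘ G)‾ H = ∫ F‾ (H ∘ G*)` for scalar square-integrable
kernels, which is Fubini's theorem. The Hilbert–Schmidt norm is dominated by the trace norm, so
rapid decay in trace norm makes the symbols square integrable in the Hilbert–Schmidt norm.
-/

section ProductRearrangement

variable {α β γ δ : Type*} [MeasurableSpace α] [MeasurableSpace β] [MeasurableSpace γ]
  [MeasurableSpace δ]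

variable (α β γ) in
/-- The exchange `((a, b), c) ↦ ((a, c), b)` of the last two factors of a product. -/
def prodRightComm : (α × β) × γ ≃ᵐ (α × γ) × β :=
  MeasurableEquiv.prodAssoc.trans
    (((MeasurableEquiv.refl α).prodCongr MeasurableEquiv.prodComm).trans
      MeasurableEquiv.prodAssoc.symm)

variable (α β γ δ) in
/-- The middle-four interchange `((a, b), (c, e)) ↦ ((a, c), (b, e))`. -/
def prodMiddleComm : (α × β) × (γ × δ) ≃ᵐ (α × γ) × (β × δ) :=
  MeasurableEquiv.prodAssoc.symm.trans
    (((prodRightComm α β γ).prodCongr (MeasurableEquiv.refl δ)).trans MeasurableEquiv.prodAssoc)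

variable (μ : Measure α) (ν : Measure β) (τ : Measure γ) (σ : Measure δ)
  [SigmaFinite μ] [SigmaFinite ν] [SigmaFinite τ] [SigmaFinite σ]

lemma measurePreserving_prodRightComm :
    MeasurePreserving (prodRightComm α β γ) ((μ.prod ν).prod τ) ((μ.prod τ).prod ν) :=
  ((measurePreserving_prodAssoc μ τ ν).symm _).comp
    (((MeasurePreserving.id μ).prod Measure.measurePreserving_swap).comp
      (measurePreserving_prodAssoc μ ν τ))

lemma measurePreserving_prodMiddleComm :
    MeasurePreserving (prodMiddleComm α β γ δ)
      ((μ.prod ν).prod (τ.prod σ)) ((μ.prod τ).prod (ν.prod σ)) :=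
  (measurePreserving_prodAssoc (μ.prod τ) ν σ).comp
    (((measurePreserving_prodRightComm μ ν τ).prod (MeasurePreserving.id σ)).comp
      ((measurePreserving_prodAssoc (μ.prod ν) τ σ).symm _))

lemma volume_preserving_prodMiddleComm {α β γ δ : Type*} [MeasureSpace α] [MeasureSpace β]
    [MeasureSpace γ] [MeasureSpace δ] [SigmaFinite (volume : Measure α)]
    [SigmaFinite (volume : Measure β)] [SigmaFinite (volume : Measure γ)]
    [SigmaFinite (volume : Measure δ)] : MeasurePreserving (prodMiddleComm α β γ δ) :=
  measurePreserving_prodMiddleComm volume volume volume volume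

end ProductRearrangement

section KernelComposition

variable {𝕜 α β γ : Type*} [RCLike 𝕜]
  [MeasurableSpace α] [MeasurableSpace β] [MeasurableSpace γ]
  {μ : Measure α} {ν : Measure β} {τ : Measure γ}
  {F : α × β → 𝕜} {G : β × γ → 𝕜} {H : α × γ → 𝕜}

/-- The kernel of the composition of the integral operators with kernels `F` and `G`. -/
def kernelComp (ν : Measure β) (F : α × β → 𝕜) (G : β × γ → 𝕜) (p : α × γ) : 𝕜 :=
  ∫ b, F (p.1, b) * G (b, p.2) ∂ν

lemma norm_integral_mul_sq_le {f g : β → 𝕜} (hf : MemLp f 2 ν) (hg : MemLp g 2 ν) :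
    ‖∫ b, f b * g b ∂ν‖ ^ 2 ≤ (∫ b, ‖f b‖ ^ 2 ∂ν) * ∫ b, ‖g b‖ ^ 2 ∂ν := by
  have hholder : ∫ b, ‖f b‖ * ‖g b‖ ∂ν ≤
      √(∫ b, ‖f b‖ ^ 2 ∂ν) * √(∫ b, ‖g b‖ ^ 2 ∂ν) := by
    simpa [Real.sqrt_eq_rpow] using integral_mul_norm_le_Lp_mul_Lq (μ := ν) (f := f) (g := g)
      Real.HolderConjugate.two_two (by simpa using hf) (by simpa using hg)
  calc ‖∫ b, f b * g b ∂ν‖ ^ 2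
      ≤ (∫ b, ‖f b‖ * ‖g b‖ ∂ν) ^ 2 := by
        gcongr
        simpa only [norm_mul] using norm_integral_le_integral_norm fun b => f b * g b
    _ ≤ (√(∫ b, ‖f b‖ ^ 2 ∂ν) * √(∫ b, ‖g b‖ ^ 2 ∂ν)) ^ 2 := by
        gcongr
    _ = (∫ b, ‖f b‖ ^ 2 ∂ν) * ∫ b, ‖g b‖ ^ 2 ∂ν := by
        rw [mul_pow, Real.sq_sqrt (integral_nonneg fun b => sq_nonneg _),
          Real.sq_sqrt (integral_nonneg fun b => sq_nonneg _)]

variable [SigmaFinite μ] [SigmaFinite ν] [SigmaFinite τ]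

lemma ae_memLp_two_prodMk_left (hF : MemLp F 2 (μ.prod ν)) :
    ∀ᵐ a ∂μ, MemLp (fun b => F (a, b)) 2 ν := by
  filter_upwards [hF.1.prodMk_left, ((memLp_two_iff_integrable_sq_norm hF.1).1 hF).prod_right_ae]
    with a hmeas hint
  exact (memLp_two_iff_integrable_sq_norm hmeas).2 hint

lemma ae_memLp_two_prodMk_right (hG : MemLp G 2 (ν.prod τ)) :
    ∀ᵐ c ∂τ, MemLp (fun b => G (b, c)) 2 ν :=
  ae_memLp_two_prodMk_left (hG.comp_measurePreserving Measure.measurePreserving_swap)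

lemma ae_memLp_two_sections (hF : MemLp F 2 (μ.prod ν)) (hG : MemLp G 2 (ν.prod τ)) :
    ∀ᵐ p ∂μ.prod τ, MemLp (fun b => F (p.1, b)) 2 ν ∧ MemLp (fun b => G (b, p.2)) 2 ν :=
  (Measure.quasiMeasurePreserving_fst.ae (ae_memLp_two_prodMk_left hF)).and
    (Measure.quasiMeasurePreserving_snd.ae (ae_memLp_two_prodMk_right hG))

lemma aestronglyMeasurable_kernelComp_integrand
    (hF : AEStronglyMeasurable F (μ.prod ν)) (hG : AEStronglyMeasurable G (ν.prod τ)) :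
    AEStronglyMeasurable (fun q : (α × γ) × β => F (q.1.1, q.2) * G (q.2, q.1.2))
      ((μ.prod τ).prod ν) :=
  (hF.comp_quasiMeasurePreserving
      (QuasiMeasurePreserving.prodMap Measure.quasiMeasurePreserving_fst
        (Measure.QuasiMeasurePreserving.id ν))).mul
    (hG.comp_quasiMeasurePreserving (Measure.measurePreserving_swap.quasiMeasurePreserving.comp
      (QuasiMeasurePreserving.prodMap Measure.quasiMeasurePreserving_snd
        (Measure.QuasiMeasurePreserving.id ν))))

theorem memLp_kernelComp (hF : MemLp F 2 (μ.prod ν)) (hG : MemLp G 2 (ν.prod τ)) :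
    MemLp (kernelComp ν F G) 2 (μ.prod τ) := by
  have hmeas : AEStronglyMeasurable (kernelComp ν F G) (μ.prod τ) :=
    (aestronglyMeasurable_kernelComp_integrand hF.1 hG.1).integral_prod_right'
  rw [memLp_two_iff_integrable_sq_norm hmeas]
  have hF2 := ((memLp_two_iff_integrable_sq_norm hF.1).1 hF).integral_prod_left
  have hG2 := ((memLp_two_iff_integrable_sq_norm hG.1).1 hG).integral_prod_right
  refine (hF2.mul_prod hG2).mono' (hmeas.norm.pow 2) ?_
  filter_upwards [ae_memLp_two_sections hF hG] with p hp
  simpa only [kernelComp, norm_pow, norm_norm] using norm_integral_mul_sq_le hp.1 hp.2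

lemma integrable_kernelComp_integrand_mul (hF : MemLp F 2 (μ.prod ν)) (hG : MemLp G 2 (ν.prod τ))
    (hH : MemLp H 2 (μ.prod τ)) :
    Integrable (fun q : (α × γ) × β => F (q.1.1, q.2) * G (q.2, q.1.2) * H q.1)
      ((μ.prod τ).prod ν) := by
  refine (integrable_prod_iff
    ((aestronglyMeasurable_kernelComp_integrand hF.1 hG.1).mul hH.1.comp_fst)).2 ⟨?_, ?_⟩
  · filter_upwards [ae_memLp_two_sections hF hG] with p hp
    exact (hp.1.integrable_mul hp.2).mul_const (H p)
  · have hcomp := (memLp_kernelComp hF.norm hG.norm).integrable_mul hH.norm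
    refine hcomp.congr (.of_forall fun p => ?_)
    simp only [Pi.mul_apply, kernelComp, norm_mul, integral_mul_const]

theorem integral_kernelComp_mul (hF : MemLp F 2 (μ.prod ν)) (hG : MemLp G 2 (ν.prod τ))
    (hH : MemLp H 2 (μ.prod τ)) :
    ∫ p, kernelComp ν F G p * H p ∂μ.prod τ =
      ∫ p, F p * kernelComp τ H (G ∘ Prod.swap) p ∂μ.prod ν := by
  have he := measurePreserving_prodRightComm μ ν τ
  have hint := integrable_kernelComp_integrand_mul hF hG hH
  calc ∫ p, kernelComp ν F G p * H p ∂μ.prod τ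
      = ∫ q : (α × γ) × β, F (q.1.1, q.2) * G (q.2, q.1.2) * H q.1 ∂(μ.prod τ).prod ν := by
        simp only [integral_prod _ hint, integral_mul_const, kernelComp]
    _ = ∫ q : (α × β) × γ, F q.1 * G (q.1.2, q.2) * H (q.1.1, q.2) ∂(μ.prod ν).prod τ :=
        (he.integral_comp' _).symm
    _ = ∫ p, F p * kernelComp τ H (G ∘ Prod.swap) p ∂μ.prod ν := by
        refine (integral_prod _ ((he.integrable_comp_emb
          (prodRightComm α β γ).measurableEmbedding).2 hint)).trans ?_
        refine integral_congr_ae (.of_forall fun p => ?_)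
        simp only [kernelComp, ← integral_const_mul]
        refine integral_congr_ae (.of_forall fun c => ?_)
        change F p * G (p.2, c) * H (p.1, c) = F p * (H (p.1, c) * G (p.2, c))
        ring

theorem integral_inner_kernelComp (hF : MemLp F 2 (μ.prod ν)) (hG : MemLp G 2 (ν.prod τ))
    (hH : MemLp H 2 (μ.prod τ)) :
    ∫ p, inner 𝕜 (kernelComp ν F G p) (H p) ∂μ.prod τ =
      ∫ p, inner 𝕜 (F p) (kernelComp τ H (star G ∘ Prod.swap) p) ∂μ.prod ν := by
  have hconj (p : α × γ) :
      starRingEnd 𝕜 (kernelComp ν F G p) = kernelComp ν (star F) (star G) p := by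
    simp only [kernelComp, ← integral_conj, map_mul, Pi.star_apply, RCLike.star_def]
  simpa only [RCLike.inner_apply', hconj, Pi.star_apply, RCLike.star_def] using
    integral_kernelComp_mul hF.star hG.star hH

end KernelComposition

section OrthonormalFamilies

variable {𝕜 E ι : Type*} [RCLike 𝕜] [NormedAddCommGroup E] [InnerProductSpace 𝕜 E]

lemma orthonormal_dist_sq {v : ι → E} (hv : Orthonormal 𝕜 v) {i j : ι} (hij : i ≠ j) :
    dist (v i) (v j) ^ 2 = 2 := by
  rw [dist_eq_norm, norm_sub_sq (𝕜 := 𝕜), hv.2 hij, hv.1 i, hv.1 j]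
  norm_num

lemma orthonormal_countable [TopologicalSpace.SeparableSpace E] {v : ι → E}
    (hv : Orthonormal 𝕜 v) : Countable ι := by
  refine Pairwise.countable_of_isOpen_disjoint (s := fun i => Metric.ball (v i) (1 / 2))
    (fun i j hij => Metric.ball_disjoint_ball ?_) (fun i => Metric.isOpen_ball)
    (fun i => ⟨v i, by simp⟩)
  have hdist := orthonormal_dist_sq hv hij
  nlinarith [dist_nonneg (x := v i) (y := v j)]

lemma hilbertBasis_tsum_enorm_inner_sq (b : HilbertBasis ι 𝕜 E) (x : E) :
    ∑' i, ‖inner 𝕜 (b i) x‖ₑ ^ 2 = ‖x‖ₑ ^ 2 := by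
  have hsum : HasSum (fun i => ‖inner 𝕜 (b i) x‖ ^ 2) (‖x‖ ^ 2) := by
    simpa [b.repr_apply_apply] using lp.hasSum_norm (p := 2) (by norm_num) (b.repr x)
  have hsum' : HasSum (fun i => ‖inner 𝕜 (b i) x‖₊ ^ 2) (‖x‖₊ ^ 2) :=
    NNReal.hasSum_coe.1 (by simpa using hsum)
  exact_mod_cast (ENNReal.hasSum_coe.2 hsum').tsum_eq

lemma sum_enorm_sq (s : Finset ι) (x : ι → E) :
    ∑ i ∈ s, ‖x i‖ₑ ^ 2 = ENNReal.ofReal (∑ i ∈ s, ‖x i‖ ^ 2) := by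
  rw [ENNReal.ofReal_sum_of_nonneg fun i _ => sq_nonneg _]
  exact Finset.sum_congr rfl fun i _ => by rw [ENNReal.ofReal_pow (norm_nonneg _), ofReal_norm]

end OrthonormalFamilies

section HilbertSchmidt

variable {E H H' : Type*} [NormedAddCommGroup E] [InnerProductSpace ℂ E]
  [NormedAddCommGroup H] [InnerProductSpace ℂ H]
  [NormedAddCommGroup H'] [InnerProductSpace ℂ H']

/-- The squared Hilbert–Schmidt norm, as a supremum over finite orthonormal families so that it
does not refer to a Hilbert basis. -/
def hilbertSchmidtNormSq (T : H →L[ℂ] H') : ℝ≥0∞ :=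
  ⨆ (n : ℕ) (e : Fin n → H) (_ : Orthonormal ℂ e), ∑ i, ‖T (e i)‖ₑ ^ 2

lemma tsum_enorm_sq_le_hilbertSchmidtNormSq (T : H →L[ℂ] H') {ι : Type*} {e : ι → H}
    (he : Orthonormal ℂ e) : ∑' i, ‖T (e i)‖ₑ ^ 2 ≤ hilbertSchmidtNormSq T := by
  rw [ENNReal.tsum_eq_iSup_sum]
  refine iSup_le fun s => ?_
  have hle := le_iSup₂_of_le (f := fun n (e : Fin n → H) =>
      ⨆ _ : Orthonormal ℂ e, ∑ i, ‖T (e i)‖ₑ ^ 2) s.card (fun k => e (s.equivFin.symm k))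
    (le_iSup_of_le (he.comp _ (Subtype.val_injective.comp s.equivFin.symm.injective)) le_rfl)
  refine le_of_eq_of_le ?_ hle
  rw [Equiv.sum_comp s.equivFin.symm fun i : s => ‖T (e i)‖ₑ ^ 2,
    Finset.sum_coe_sort s fun i => ‖T (e i)‖ₑ ^ 2]

lemma sum_norm_inner_le_traceNormE (T : H →L[ℂ] H') {ι : Type*} [Fintype ι] {e : ι → H}
    {v : ι → H'} (he : Orthonormal ℂ e) (hv : Orthonormal ℂ v) :
    ENNReal.ofReal (∑ i, ‖⟪v i, T (e i)⟫_ℂ‖) ≤ traceNormE T := by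
  have φ := (Fintype.equivFin ι).symm
  rw [← Equiv.sum_comp φ]
  exact le_iSup_of_le _ (le_iSup₂_of_le _ _ (le_iSup₂_of_le
    (he.comp φ φ.injective) (hv.comp φ φ.injective) le_rfl))

lemma orthonormal_normalize {ι : Type*} {w : ι → H} (hne : ∀ i, w i ≠ 0)
    (horth : Pairwise fun i j => ⟪w i, w j⟫_ℂ = 0) :
    Orthonormal ℂ fun i => ((‖w i‖⁻¹ : ℝ) : ℂ) • w i := by
  refine ⟨fun i => ?_, fun i j hij => ?_⟩
  · simpa using norm_smul_inv_norm (𝕜 := ℂ) (hne i)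
  · simp only [inner_smul_left, inner_smul_right, horth hij, mul_zero]

lemma sum_norm_le_traceNormE (T : H →L[ℂ] H') {ι : Type*} [Fintype ι] {e : ι → H}
    (he : Orthonormal ℂ e) (horth : Pairwise fun i j => ⟪T (e i), T (e j)⟫_ℂ = 0) :
    ENNReal.ofReal (∑ i, ‖T (e i)‖) ≤ traceNormE T := by
  classical
  let κ := {i // T (e i) ≠ 0}
  have hv : Orthonormal ℂ fun k : κ => ((‖T (e k)‖⁻¹ : ℝ) : ℂ) • T (e k) :=
    orthonormal_normalize (fun k => k.2) fun j k hjk => horth (Subtype.val_injective.ne hjk)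
  have hinner (k : κ) : ‖⟪((‖T (e k)‖⁻¹ : ℝ) : ℂ) • T (e k), T (e k)⟫_ℂ‖ = ‖T (e k)‖ := by
    have hk : ‖T (e k)‖ ≠ 0 := norm_ne_zero_iff.2 k.2
    rw [inner_smul_left, inner_self_eq_norm_sq_to_K]
    simp [sq, hk]
  have hsum : ∑ i, ‖T (e i)‖ = ∑ k : κ, ‖T (e k)‖ := by
    rw [← Finset.sum_filter_of_ne (p := fun i => T (e i) ≠ 0) fun i _ hi => norm_ne_zero_iff.1 hi]
    exact Finset.sum_subtype _ (by simp) _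
  rw [hsum, ← Finset.sum_congr rfl fun k _ => hinner k]
  exact sum_norm_inner_le_traceNormE T (he.comp _ Subtype.val_injective) hv

variable [CompleteSpace H']

lemma sum_norm_map_sq_eq_trace [FiniteDimensional ℂ E] [CompleteSpace E] {ι : Type*} [Fintype ι]
    (W : E →L[ℂ] H') (b : OrthonormalBasis ι ℂ E) :
    ((∑ i, ‖W (b i)‖ ^ 2 : ℝ) : ℂ) =
      LinearMap.trace ℂ E (ContinuousLinearMap.adjoint W ∘L W : E →L[ℂ] E) := by
  rw [LinearMap.trace_eq_sum_inner _ b]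
  simp [ContinuousLinearMap.adjoint_inner_right, inner_self_eq_norm_sq_to_K]

lemma exists_orthonormalBasis_pairwise_inner_map_eq_zero [FiniteDimensional ℂ E]
    (W : E →L[ℂ] H') : ∃ u : OrthonormalBasis (Fin (Module.finrank ℂ E)) ℂ E,
      Pairwise fun i j => ⟪W (u i), W (u j)⟫_ℂ = 0 := by
  have := FiniteDimensional.complete ℂ E
  let S := ContinuousLinearMap.adjoint W ∘L W
  have hS : (S : E →ₗ[ℂ] E).IsSymmetric := fun x y => by
    simp [S, ContinuousLinearMap.adjoint_inner_left, ContinuousLinearMap.adjoint_inner_right]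
  refine ⟨hS.eigenvectorBasis rfl, fun i j hij => ?_⟩
  have heig := hS.apply_eigenvectorBasis rfl j
  change ⟪W (hS.eigenvectorBasis rfl i), W (hS.eigenvectorBasis rfl j)⟫_ℂ = 0
  rw [← ContinuousLinearMap.adjoint_inner_right]
  change ⟪_, (S : E →ₗ[ℂ] E) (hS.eigenvectorBasis rfl j)⟫_ℂ = 0
  rw [heig, inner_smul_right, (hS.eigenvectorBasis rfl).orthonormal.2 hij, mul_zero]

theorem hilbertSchmidtNormSq_le_traceNormE_sq (T : H →L[ℂ] H') :
    hilbertSchmidtNormSq T ≤ traceNormE T ^ 2 := by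
  refine iSup_le fun n => iSup₂_le fun e he => ?_
  let b := EuclideanSpace.basisFun (Fin n) ℂ
  let L := b.toBasis.constr ℂ e
  have hL : L ∘ b.toBasis = e := funext (b.toBasis.constr_basis ℂ e)
  let J : EuclideanSpace ℂ (Fin n) →ₗᵢ[ℂ] H :=
    L.isometryOfOrthonormal (v := b.toBasis) (by simp) (hL ▸ he)
  have hJ (i : Fin n) : J (b i) = e i := by
    rw [← b.coe_toBasis]
    exact congrFun hL i
  let W := T ∘L J.toContinuousLinearMap
  obtain ⟨u, hu⟩ := exists_orthonormalBasis_pairwise_inner_map_eq_zero W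
  have hchange : ∑ i, ‖W (b i)‖ ^ 2 = ∑ k, ‖W (u k)‖ ^ 2 := by
    exact_mod_cast (sum_norm_map_sq_eq_trace W b).trans (sum_norm_map_sq_eq_trace W u).symm
  calc ∑ i, ‖T (e i)‖ₑ ^ 2
      = ENNReal.ofReal (∑ k, ‖T (J (u k))‖ ^ 2) := by
        rw [sum_enorm_sq]
        simpa [W, hJ] using congrArg ENNReal.ofReal hchange
    _ ≤ ENNReal.ofReal (∑ k, ‖T (J (u k))‖) ^ 2 := by
        rw [← ENNReal.ofReal_pow (Finset.sum_nonneg fun _ _ => norm_nonneg _)]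
        exact ENNReal.ofReal_le_ofReal
          (Finset.sum_sq_le_sq_sum_of_nonneg fun _ _ => norm_nonneg _)
    _ ≤ traceNormE T ^ 2 := by
        gcongr
        exact sum_norm_le_traceNormE T (u.orthonormal.comp_linearIsometry J) hu

/-- The operator-valued function `u` is square integrable in the Hilbert–Schmidt norm. -/
def IsHilbertSchmidtL2 {X : Type*} [MeasureSpace X] (u : X → H →L[ℂ] H') : Prop :=
  ∫⁻ x, hilbertSchmidtNormSq (u x) < ⊤

end HilbertSchmidt

section RapidDecay

lemma lintegral_sq_lt_top_of_rapid_decay {V : Type*} [NormedAddCommGroup V] [NormedSpace ℝ V]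
    [FiniteDimensional ℝ V] [MeasurableSpace V] [BorelSpace V] {μ : Measure V}
    [μ.IsAddHaarMeasure] {f : V → ℝ≥0∞} {k : ℕ} (hk : Module.finrank ℝ V < k) {C : ℝ}
    (hf : ∀ x, ENNReal.ofReal ((1 + ‖x‖) ^ k) * f x ≤ ENNReal.ofReal C) :
    ∫⁻ x, f x ^ 2 ∂μ < ⊤ := by
  have hdecay (x : V) : f x ≤ ENNReal.ofReal C * ENNReal.ofReal ((1 + ‖x‖) ^ (-(k : ℝ))) := by
    have hpos : 0 < (1 + ‖x‖) ^ k := by positivity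
    rw [Real.rpow_neg (by positivity), Real.rpow_natCast, ENNReal.ofReal_inv_of_pos hpos,
      ← div_eq_mul_inv, ENNReal.le_div_iff_mul_le (.inl (by simpa using hpos))
        (.inl ENNReal.ofReal_ne_top), mul_comm]
    exact hf x
  have hbound (x : V) : f x ≤ ENNReal.ofReal C := by
    have hone : 1 ≤ ENNReal.ofReal ((1 + ‖x‖) ^ k) := by
      simpa using one_le_pow₀ (n := k) (le_add_of_nonneg_right (norm_nonneg x))
    exact (le_mul_of_one_le_left' hone).trans (hf x)
  calc ∫⁻ x, f x ^ 2 ∂μ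
      ≤ ∫⁻ x, ENNReal.ofReal C ^ 2 * ENNReal.ofReal ((1 + ‖x‖) ^ (-(k : ℝ))) ∂μ := by
        refine lintegral_mono fun x => ?_
        rw [sq, sq, mul_assoc]
        exact mul_le_mul' (hbound x) (hdecay x)
    _ = ENNReal.ofReal C ^ 2 * ∫⁻ x, ENNReal.ofReal ((1 + ‖x‖) ^ (-(k : ℝ))) ∂μ :=
        lintegral_const_mul' _ _ (by simp)
    _ < ⊤ := ENNReal.mul_lt_top (by simp)
        (finite_integral_one_add_norm (by exact_mod_cast hk))

instance isAddHaarMeasure_volume_prod {V W : Type*} [NormedAddCommGroup V] [NormedAddCommGroup W]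
    [MeasureSpace V] [MeasureSpace W] [BorelSpace V] [BorelSpace W] [SecondCountableTopology V]
    [SecondCountableTopology W] [SigmaFinite (volume : Measure V)]
    [SigmaFinite (volume : Measure W)] [(volume : Measure V).IsAddHaarMeasure]
    [(volume : Measure W).IsAddHaarMeasure] : (volume : Measure (V × W)).IsAddHaarMeasure :=
  inferInstanceAs ((volume : Measure V).prod (volume : Measure W)).IsAddHaarMeasure

instance hasTemperateGrowth_volume_phaseSpace {d : ℕ} :
    (volume : Measure (Ed d × Ed d)).HasTemperateGrowth :=
  Measure.IsAddHaarMeasure.instHasTemperateGrowth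

theorem TCSchwartz.isHilbertSchmidtL2 {d : ℕ} {H H' : Type*} [NormedAddCommGroup H]
    [InnerProductSpace ℂ H] [NormedAddCommGroup H'] [InnerProductSpace ℂ H'] [CompleteSpace H']
    {u : SchwartzMap (Ed d × Ed d) (H →L[ℂ] H')} (hu : TCSchwartz u) : IsHilbertSchmidtL2 u := by
  obtain ⟨C, hC⟩ := hu.2 (Module.finrank ℝ (Ed d × Ed d) + 1) [] []
  exact (lintegral_mono fun X => hilbertSchmidtNormSq_le_traceNormE_sq (u X)).trans_lt
    (lintegral_sq_lt_top_of_rapid_decay (Nat.lt_succ_self _) hC)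

end RapidDecay

section PartialFourier

open scoped FourierTransform

variable {W V E : Type*} [NormedAddCommGroup W] [NormedSpace ℝ W]
  [NormedAddCommGroup V] [InnerProductSpace ℝ V]
  [NormedAddCommGroup E]

section Slice

variable [NormedSpace ℝ E]

/-- The Schwartz function `η ↦ u (w, η)`, the restriction of `u` to a fibre of phase space. -/
def momentumSlice (u : 𝓢(W × V, E)) (w : W) : 𝓢(V, E) :=
  SchwartzMap.compCLM ℝ (g := fun η : V => (w, η))
    (by
      have hadd : (fun η : V => (w, η)) = fun η => (w, 0) + ContinuousLinearMap.inr ℝ W V η := by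
        ext η <;> simp
      rw [hadd]
      fun_prop)
    ⟨1, 1, fun η => by
      rw [one_mul, pow_one]
      exact (le_max_right ‖w‖ ‖η‖).trans (le_add_of_nonneg_left zero_le_one)⟩ u

lemma momentumSlice_apply (u : 𝓢(W × V, E)) (w : W) (η : V) :
    momentumSlice u w η = u (w, η) := rfl

variable [FiniteDimensional ℝ V] [MeasurableSpace V] [BorelSpace V]

lemma exists_integrable_norm_momentumSlice_le (u : 𝓢(W × V, E)) :
    ∃ g : V → ℝ, Integrable g ∧ ∀ w η, ‖momentumSlice u w η‖ ≤ g η := by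
  let k := Module.finrank ℝ V + 1
  let C := 2 ^ k * (Finset.Iic (k, 0)).sup (fun m => SchwartzMap.seminorm ℝ m.1 m.2) u
  refine ⟨fun η => C * (1 + ‖η‖) ^ (-(k : ℝ)),
    (integrable_one_add_norm (by simp [k])).const_mul C, fun w η => ?_⟩
  have hC : (1 + ‖(w, η)‖) ^ k * ‖u (w, η)‖ ≤ C := by
    simpa only [norm_iteratedFDeriv_zero] using SchwartzMap.one_add_le_sup_seminorm_apply
      (𝕜 := ℝ) (m := (k, 0)) (k := k) (n := 0) le_rfl le_rfl u (w, η)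
  change ‖momentumSlice u w η‖ ≤ C * (1 + ‖η‖) ^ (-(k : ℝ))
  rw [Real.rpow_neg (by positivity), Real.rpow_natCast, ← div_eq_mul_inv,
    le_div_iff₀ (by positivity)]
  refine le_trans ?_ hC
  have hη : ‖η‖ ≤ ‖(w, η)‖ := le_max_right _ _
  rw [momentumSlice_apply, mul_comm]
  gcongr

end Slice

variable [NormedSpace ℂ E] [FiniteDimensional ℝ V] [MeasurableSpace V] [BorelSpace V]

/-- The Fourier transform of `u` in the momentum variable alone. -/
def partialFourier (u : 𝓢(W × V, E)) (q : W × V) : E :=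
  𝓕 (momentumSlice u q.1) q.2

lemma partialFourier_eq_integral (u : 𝓢(W × V, E)) (w : W) (ξ : V) :
    partialFourier u (w, ξ) =
      ∫ η, Complex.exp (((-2 * π * ⟪η, ξ⟫_ℝ : ℝ) : ℂ) * Complex.I) • u (w, η) := by
  rw [partialFourier, SchwartzMap.fourier_coe, Real.fourier_eq']
  rfl

lemma norm_partialFourier_le (u : 𝓢(W × V, E)) (w : W) (ξ : V) :
    ‖partialFourier u (w, ξ)‖ ≤ ∫ η, ‖u (w, η)‖ := by
  rw [partialFourier_eq_integral]
  refine (norm_integral_le_integral_norm _).trans_eq ?_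
  simp only [norm_smul, Complex.norm_exp_ofReal_mul_I, one_mul]

lemma exists_norm_partialFourier_le (u : 𝓢(W × V, E)) : ∃ C, ∀ q, ‖partialFourier u q‖ ≤ C := by
  obtain ⟨g, hg, hle⟩ := exists_integrable_norm_momentumSlice_le u
  exact ⟨∫ η, g η, fun q => (norm_partialFourier_le u q.1 q.2).trans
    (integral_mono (momentumSlice u q.1).integrable.norm hg (hle q.1))⟩

lemma continuous_partialFourier (u : 𝓢(W × V, E)) : Continuous (partialFourier u) := by
  obtain ⟨g, hg, hle⟩ := exists_integrable_norm_momentumSlice_le u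
  have hu := u.continuous
  have hint : partialFourier u = fun q : W × V =>
      ∫ η, Complex.exp (((-2 * π * ⟪η, q.2⟫_ℝ : ℝ) : ℂ) * Complex.I) • u (q.1, η) :=
    funext fun q => partialFourier_eq_integral u q.1 q.2
  rw [hint]
  refine continuous_of_dominated (fun q => Continuous.aestronglyMeasurable (by fun_prop))
    (fun q => .of_forall fun η => ?_) hg (.of_forall fun η => by fun_prop)
  rw [norm_smul, Complex.norm_exp_ofReal_mul_I, one_mul]
  exact hle q.1 η

lemma partialFourier_injective [CompleteSpace E] :
    Function.Injective (partialFourier : 𝓢(W × V, E) → W × V → E) := by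
  intro u v huv
  ext ⟨w, η⟩
  have hslice : momentumSlice u w = momentumSlice v w :=
    (FourierTransform.fourierCLE ℂ 𝓢(V, E)).injective
      (SchwartzMap.ext fun ξ => congrFun huv (w, ξ))
  exact DFunLike.congr_fun hslice η

end PartialFourier

lemma integrable_inner_of_memLp_two {α 𝕜 E : Type*} [MeasurableSpace α] {μ : Measure α} [RCLike 𝕜]
    [NormedAddCommGroup E] [InnerProductSpace 𝕜 E] {f g : α → E} (hf : MemLp f 2 μ)
    (hg : MemLp g 2 μ) : Integrable (fun x => inner 𝕜 (f x) (g x)) μ :=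
  (hf.norm.integrable_mul hg.norm).mono' (hf.1.inner hg.1)
    (.of_forall fun _ => norm_inner_le_norm _ _)

section PartialPlancherel

open scoped FourierTransform

variable {W V E : Type*} [NormedAddCommGroup W] [NormedSpace ℝ W] [FiniteDimensional ℝ W]
  [MeasureSpace W] [BorelSpace W] [(volume : Measure W).IsAddHaarMeasure]
  [NormedAddCommGroup V] [InnerProductSpace ℝ V] [FiniteDimensional ℝ V] [MeasurableSpace V]
  [BorelSpace V] [NormedAddCommGroup E] [InnerProductSpace ℂ E] [CompleteSpace E]

lemma memLp_partialFourier (u : 𝓢(W × V, E)) : MemLp (partialFourier u) 2 := by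
  have hmeas : AEStronglyMeasurable (partialFourier u) (volume.prod volume) :=
    (continuous_partialFourier u).aestronglyMeasurable
  have hu : Integrable (fun q => ‖u q‖ ^ 2) (volume.prod volume) :=
    (u.memLp 2 (volume : Measure (W × V))).integrable_norm_pow two_ne_zero
  refine (memLp_two_iff_integrable_sq_norm hmeas).2
    ((integrable_prod_iff (by fun_prop)).2 ⟨.of_forall fun w => ?_, ?_⟩)
  · exact ((𝓕 (momentumSlice u w)).memLp 2 volume).integrable_norm_pow two_ne_zero
  · refine hu.integral_prod_left.congr (.of_forall fun w => ?_)
    simp only [norm_pow, norm_norm]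
    exact (SchwartzMap.integral_norm_sq_fourier (momentumSlice u w)).symm

theorem integral_inner_partialFourier (u v : 𝓢(W × V, E)) :
    ∫ q, ⟪partialFourier u q, partialFourier v q⟫_ℂ = ∫ q, ⟪u q, v q⟫_ℂ := by
  have hF := integrable_inner_of_memLp_two (𝕜 := ℂ) (memLp_partialFourier u)
    (memLp_partialFourier v)
  have huv := integrable_inner_of_memLp_two (𝕜 := ℂ) (u.memLp 2 (volume : Measure (W × V)))
    (v.memLp 2)
  rw [Measure.volume_eq_prod] at hF huv ⊢
  rw [integral_prod _ hF, integral_prod _ huv]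
  exact integral_congr_ae (.of_forall fun w =>
    SchwartzMap.integral_inner_fourier_fourier (momentumSlice u w) (momentumSlice v w))

end PartialPlancherel

section MagneticPhase

open scoped ComplexConjugate

variable {d : ℕ} {A : Ed d → Ed d}

lemma continuous_lineInt (hA : Continuous A) :
    Continuous fun p : Ed d × Ed d => lineInt A p.1 p.2 :=
  intervalIntegral.continuous_parametric_intervalIntegral_of_continuous'
    (f := fun (p : Ed d × Ed d) (s : ℝ) => ⟪A (p.1 + s • (p.2 - p.1)), p.2 - p.1⟫_ℝ)
    (by unfold Function.uncurry; fun_prop) 0 1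

lemma lineInt_symm (A : Ed d → Ed d) (x y : Ed d) : lineInt A x y = -lineInt A y x := by
  have hreverse := intervalIntegral.integral_comp_sub_left (a := 0) (b := 1)
    (fun s : ℝ => ⟪A (y + s • (x - y)), x - y⟫_ℝ) 1
  rw [sub_self, sub_zero] at hreverse
  rw [lineInt, lineInt, ← hreverse, ← intervalIntegral.integral_neg]
  refine intervalIntegral.integral_congr fun s _ => ?_
  have hpoint : y + (1 - s) • (x - y) = x + s • (y - x) := by module
  simp only [hpoint, ← inner_neg_right, neg_sub]

/-- The phase factor `e^{-i(λ/ε)Γ_A(εx,εy)}` through which the vector potential enters `opA`. -/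
def magneticPhase (ε lam : ℝ) (A : Ed d → Ed d) (x y : Ed d) : ℂ :=
  Complex.exp (-Complex.I * (((lam / ε) * lineInt A (ε • x) (ε • y) : ℝ) : ℂ))

lemma norm_magneticPhase (ε lam : ℝ) (A : Ed d → Ed d) (x y : Ed d) :
    ‖magneticPhase ε lam A x y‖ = 1 := by
  simp [magneticPhase, Complex.norm_exp]

lemma continuous_magneticPhase (ε lam : ℝ) (hA : Continuous A) :
    Continuous fun p : Ed d × Ed d => magneticPhase ε lam A p.1 p.2 := by
  have hline : Continuous fun p : Ed d × Ed d => lineInt A (ε • p.1) (ε • p.2) :=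
    (continuous_lineInt hA).comp (f := fun p : Ed d × Ed d => (ε • p.1, ε • p.2)) (by fun_prop)
  unfold magneticPhase
  fun_prop

lemma conj_wPhase (ε lam : ℝ) (A : Ed d → Ed d) (x y η : Ed d) :
    conj (wPhase ε lam A x y η) = wPhase ε lam A y x η := by
  unfold wPhase
  rw [map_mul, ← Complex.exp_conj, ← Complex.exp_conj, lineInt_symm A (ε • y) (ε • x),
    ← neg_sub y x, inner_neg_left]
  simp

end MagneticPhase

section WeylCoordinates

variable {d : ℕ}

/-- The map `(x, y) ↦ ((ε/2)(x+y), (y-x)/2π)`. In these coordinates the kernel of a magnetic Weyl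
quantization is, up to the magnetic phase, a partial Fourier transform of the symbol; the factor
`1/2π` accounts for the normalization of `𝓕`. -/
def weylCoord (d : ℕ) (ε : ℝ) : (Ed d × Ed d) →ₗ[ℝ] (Ed d × Ed d) :=
  LinearMap.prod ((ε / 2) • (LinearMap.fst ℝ (Ed d) (Ed d) + LinearMap.snd ℝ (Ed d) (Ed d)))
    ((2 * π)⁻¹ • (LinearMap.snd ℝ (Ed d) (Ed d) - LinearMap.fst ℝ (Ed d) (Ed d)))

lemma weylCoord_apply (ε : ℝ) (x y : Ed d) :
    weylCoord d ε (x, y) = ((ε / 2) • (x + y), (2 * π)⁻¹ • (y - x)) := rfl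

lemma continuous_weylCoord (ε : ℝ) : Continuous (weylCoord d ε) :=
  LinearMap.continuous_of_finiteDimensional _

lemma weylCoord_injective {ε : ℝ} (hε : ε ≠ 0) : Function.Injective (weylCoord d ε) := by
  refine (injective_iff_map_eq_zero _).2 fun ⟨x, y⟩ hxy => ?_
  rw [weylCoord_apply, Prod.mk_eq_zero] at hxy
  have hadd : x + y = 0 := (smul_eq_zero.1 hxy.1).resolve_left (by positivity)
  have hsub : y = x := sub_eq_zero.1 ((smul_eq_zero.1 hxy.2).resolve_left (by positivity))
  subst hsub
  simpa [← two_smul ℝ] using hadd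

lemma det_weylCoord_ne_zero {ε : ℝ} (hε : ε ≠ 0) : LinearMap.det (weylCoord d ε) ≠ 0 :=
  (LinearEquiv.isUnit_det'
    (LinearEquiv.ofInjectiveEndo (weylCoord d ε) (weylCoord_injective hε))).ne_zero

end WeylCoordinates

section WeylKernel

variable {d : ℕ} {E : Type*} [NormedAddCommGroup E] [NormedSpace ℂ E] {ε : ℝ} (lam : ℝ)
  {A : Ed d → Ed d}

/-- The integral kernel of the magnetic Weyl quantization of `u`. -/
def weylKernel (ε lam : ℝ) (A : Ed d → Ed d) (u : Ed d × Ed d → E) (x y : Ed d) : E :=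
  (((2 * π) ^ d)⁻¹ : ℝ) • ∫ η, wPhase ε lam A x y η • u ((ε / 2) • (x + y), η)

lemma weylKernel_eq_partialFourier (ε : ℝ) (A : Ed d → Ed d) (u : 𝓢(Ed d × Ed d, E)) (x y : Ed d) :
    weylKernel ε lam A u x y = (((2 * π) ^ d)⁻¹ : ℝ) •
      magneticPhase ε lam A x y • partialFourier u (weylCoord d ε (x, y)) := by
  rw [weylKernel, weylCoord_apply, partialFourier_eq_integral,
    ← integral_smul (magneticPhase ε lam A x y)]
  refine congrArg _ (integral_congr_ae (.of_forall fun η => ?_))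
  beta_reduce
  have hexp : ((-2 * π * ⟪η, (2 * π)⁻¹ • (y - x)⟫_ℝ : ℝ) : ℂ) * Complex.I =
      -Complex.I * ((⟪y - x, η⟫_ℝ : ℝ) : ℂ) := by
    have hπ : (π : ℂ) ≠ 0 := by exact_mod_cast Real.pi_ne_zero
    rw [inner_smul_right, real_inner_comm]
    push_cast
    field_simp
  rw [hexp, smul_smul, mul_comm]
  rfl

lemma norm_weylKernel (ε : ℝ) (A : Ed d → Ed d) (u : 𝓢(Ed d × Ed d, E)) (x y : Ed d) :
    ‖weylKernel ε lam A u x y‖ = ((2 * π) ^ d)⁻¹ * ‖partialFourier u (weylCoord d ε (x, y))‖ := by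
  rw [weylKernel_eq_partialFourier, norm_smul, norm_smul, norm_magneticPhase, one_mul,
    Real.norm_of_nonneg (by positivity)]

lemma continuous_weylKernel (ε : ℝ) (hA : Continuous A) (u : 𝓢(Ed d × Ed d, E)) :
    Continuous fun p : Ed d × Ed d => weylKernel ε lam A u p.1 p.2 := by
  simp only [weylKernel_eq_partialFourier]
  exact ((continuous_magneticPhase ε lam hA).smul
    ((continuous_partialFourier u).comp (continuous_weylCoord ε))).const_smul _

lemma exists_norm_weylKernel_le (ε : ℝ) (A : Ed d → Ed d) (u : 𝓢(Ed d × Ed d, E)) :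
    ∃ C, ∀ x y, ‖weylKernel ε lam A u x y‖ ≤ C := by
  obtain ⟨C, hC⟩ := exists_norm_partialFourier_le u
  refine ⟨((2 * π) ^ d)⁻¹ * C, fun x y => ?_⟩
  rw [norm_weylKernel]
  gcongr
  exact hC _

lemma integrable_weylKernel (hε : ε ≠ 0) (hA : Continuous A) (u : 𝓢(Ed d × Ed d, E)) (x : Ed d) :
    Integrable fun y => weylKernel ε lam A u x y := by
  have hw : Integrable fun w => ∫ η, ‖u (w, η)‖ :=
    Integrable.integral_prod_left (u.integrable (μ := (volume : Measure (Ed d × Ed d)))).norm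
  have hy : Integrable fun y => ∫ η, ‖u ((ε / 2) • (x + y), η)‖ :=
    (hw.comp_smul (div_ne_zero hε two_ne_zero)).comp_add_left x
  refine (hy.const_mul ((2 * π) ^ d)⁻¹).mono'
    ((continuous_weylKernel lam ε hA u).comp (Continuous.prodMk_right x)).aestronglyMeasurable
    (.of_forall fun y => ?_)
  rw [norm_weylKernel]
  gcongr
  exact norm_partialFourier_le u _ _

lemma integrable_weylKernel_integrand (ε lam : ℝ) (A : Ed d → Ed d) (u : 𝓢(Ed d × Ed d, E))
    (x y : Ed d) : Integrable fun η => wPhase ε lam A x y η • u ((ε / 2) • (x + y), η) := by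
  have hu : Integrable fun η => u ((ε / 2) • (x + y), η) :=
    (momentumSlice u ((ε / 2) • (x + y))).integrable
  refine hu.norm.mono' (.smul (Continuous.aestronglyMeasurable ?_) hu.1) (.of_forall fun η => ?_)
  · unfold wPhase
    fun_prop
  · refine (norm_smul_le _ _).trans_eq ?_
    change ‖_ * magneticPhase ε lam A x y‖ * _ = _
    simp [norm_magneticPhase, Complex.norm_exp]

lemma weylKernel_injective [CompleteSpace E] (hε : ε ≠ 0) (A : Ed d → Ed d) :
    Function.Injective fun u : 𝓢(Ed d × Ed d, E) => weylKernel ε lam A u := by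
  intro u v huv
  refine partialFourier_injective (funext fun q => ?_)
  obtain ⟨p, rfl⟩ := (weylCoord d ε).surjective_of_injective (weylCoord_injective hε) q
  have hp : weylKernel ε lam A u p.1 p.2 = weylKernel ε lam A v p.1 p.2 :=
    congrFun (congrFun huv p.1) p.2
  rw [weylKernel_eq_partialFourier, weylKernel_eq_partialFourier] at hp
  have hphase : magneticPhase ε lam A p.1 p.2 ≠ 0 :=
    norm_ne_zero_iff.1 (norm_magneticPhase ε lam A p.1 p.2 ▸ one_ne_zero)
  exact smul_right_injective E hphase (smul_right_injective E (by positivity) hp)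

variable {F : Type*} [NormedAddCommGroup F] [NormedSpace ℂ F] [CompleteSpace E] [CompleteSpace F]

lemma weylKernel_continuousLinearMap_comp (L : E →L[ℂ] F) (ε : ℝ) (A : Ed d → Ed d)
    (u : 𝓢(Ed d × Ed d, E)) (x y : Ed d) :
    weylKernel ε lam A (fun X => L (u X)) x y = L (weylKernel ε lam A u x y) := by
  rw [weylKernel, weylKernel, map_real_smul L L.continuous,
    ← L.integral_comp_comm (integrable_weylKernel_integrand ε lam A u x y)]
  simp only [map_smul]

lemma weylKernel_conjLinear_comp (L : E →L⋆[ℂ] F) (ε : ℝ) (A : Ed d → Ed d)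
    (u : 𝓢(Ed d × Ed d, E)) (x y : Ed d) :
    weylKernel ε lam A (fun X => L (u X)) x y = L (weylKernel ε lam A u y x) := by
  rw [weylKernel, weylKernel, map_real_smul L L.continuous,
    ← L.integral_comp_commSL (by simp) (integrable_weylKernel_integrand ε lam A u y x)]
  simp only [map_smulₛₗ, conj_wPhase, add_comm x y]

end WeylKernel

section KernelPlancherel

lemma map_volume_weylCoord {d : ℕ} {ε : ℝ} (hε : ε ≠ 0) :
    (volume : Measure (Ed d × Ed d)).map (weylCoord d ε) =
      ENNReal.ofReal |(LinearMap.det (weylCoord d ε))⁻¹| • volume :=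
  Measure.map_linearMap_addHaar_eq_smul_addHaar volume (det_weylCoord_ne_zero hε)

lemma measurableEmbedding_weylCoord {d : ℕ} {ε : ℝ} (hε : ε ≠ 0) :
    MeasurableEmbedding (weylCoord d ε) :=
  (continuous_weylCoord ε).measurableEmbedding (weylCoord_injective hε)

/-- The constant `κ` with `⟨K_u, K_v⟩ = κ ⟨u, v⟩` for the Weyl kernels `K_u`, `K_v`. -/
def weylConst (d : ℕ) (ε : ℝ) : ℝ :=
  (((2 * π) ^ d)⁻¹) ^ 2 * |(LinearMap.det (weylCoord d ε))⁻¹|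

lemma weylConst_ne_zero (d : ℕ) {ε : ℝ} (hε : ε ≠ 0) : weylConst d ε ≠ 0 :=
  mul_ne_zero (by positivity) (abs_ne_zero.2 (inv_ne_zero (det_weylCoord_ne_zero hε)))

variable {d : ℕ} {ε : ℝ} {A : Ed d → Ed d} {E : Type*} [NormedAddCommGroup E]
  [InnerProductSpace ℂ E] [CompleteSpace E]

lemma memLp_weylKernel (hε : ε ≠ 0) (lam : ℝ) (hA : Continuous A) (u : 𝓢(Ed d × Ed d, E)) :
    MemLp (fun p : Ed d × Ed d => weylKernel ε lam A u p.1 p.2) 2 := by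
  have hpull : MemLp (partialFourier u ∘ weylCoord d ε) 2 := by
    rw [← (measurableEmbedding_weylCoord hε).memLp_map_measure_iff, map_volume_weylCoord hε]
    exact (memLp_partialFourier u).smul_measure ENNReal.ofReal_ne_top
  refine hpull.of_le_mul (c := ((2 * π) ^ d)⁻¹)
    (continuous_weylKernel lam ε hA u).aestronglyMeasurable (.of_forall fun p => ?_)
  exact (norm_weylKernel lam ε A u p.1 p.2).le

theorem integral_inner_weylKernel (hε : ε ≠ 0) (lam : ℝ) (A : Ed d → Ed d)
    (u v : 𝓢(Ed d × Ed d, E)) :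
    ∫ p : Ed d × Ed d, ⟪weylKernel ε lam A u p.1 p.2, weylKernel ε lam A v p.1 p.2⟫_ℂ =
      weylConst d ε * ∫ X, ⟪u X, v X⟫_ℂ := by
  have hpointwise (p : Ed d × Ed d) :
      ⟪weylKernel ε lam A u p.1 p.2, weylKernel ε lam A v p.1 p.2⟫_ℂ =
        (((((2 * π) ^ d)⁻¹) ^ 2 : ℝ) : ℂ) *
          ⟪partialFourier u (weylCoord d ε p), partialFourier v (weylCoord d ε p)⟫_ℂ := by
    have hθ := RCLike.conj_mul (magneticPhase ε lam A p.1 p.2)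
    rw [norm_magneticPhase] at hθ
    simp only [weylKernel_eq_partialFourier, ← Complex.coe_smul, inner_smul_left, inner_smul_right,
      Complex.conj_ofReal]
    push_cast at hθ ⊢
    linear_combination ((((2 * π) ^ d)⁻¹ : ℂ) ^ 2 *
      ⟪partialFourier u (weylCoord d ε p), partialFourier v (weylCoord d ε p)⟫_ℂ) * hθ
  simp only [hpointwise, integral_const_mul]
  rw [← (measurableEmbedding_weylCoord hε).integral_map
      fun q => ⟪partialFourier u q, partialFourier v q⟫_ℂ,
    map_volume_weylCoord hε, integral_smul_measure, integral_inner_partialFourier,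
    ENNReal.toReal_ofReal (abs_nonneg _), Complex.real_smul, weylConst, Complex.ofReal_mul,
    mul_assoc]

lemma integral_norm_sq_weylKernel (hε : ε ≠ 0) (lam : ℝ) (A : Ed d → Ed d)
    (u : 𝓢(Ed d × Ed d, E)) :
    ∫ p : Ed d × Ed d, ‖weylKernel ε lam A u p.1 p.2‖ ^ 2 = weylConst d ε * ∫ X, ‖u X‖ ^ 2 := by
  have huu := integral_inner_weylKernel hε lam A u u
  simp only [inner_self_eq_norm_sq_to_K] at huu
  apply Complex.ofReal_injective
  push_cast [← integral_complex_ofReal]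
  exact huu

end KernelPlancherel

section CountableFamilies

variable {d : ℕ} {ε : ℝ} {A : Ed d → Ed d} {J : Type*} [MeasurableSpace J]
  [DiscreteMeasurableSpace J] [Countable J] {m : Measure J}
  {φ ψ : J → 𝓢(Ed d × Ed d, ℂ)}

lemma aestronglyMeasurable_of_forall_continuous {X : Type*} [TopologicalSpace X] [MeasurableSpace X]
    [OpensMeasurableSpace X] {F : X × J → ℂ} (hF : ∀ j, Continuous fun x => F (x, j))
    (μ : Measure (X × J)) : AEStronglyMeasurable F μ :=
  (measurable_from_prod_countable_left fun j => (hF j).measurable).aestronglyMeasurable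

theorem memLp_weylKernel_family_iff (hε : ε ≠ 0) (lam : ℝ) (hA : Continuous A)
    (φ : J → 𝓢(Ed d × Ed d, ℂ)) :
    MemLp (fun q : (Ed d × Ed d) × J => weylKernel ε lam A (φ q.2) q.1.1 q.1.2) 2
        (volume.prod m) ↔
      MemLp (fun q : (Ed d × Ed d) × J => φ q.2 q.1) 2 (volume.prod m) := by
  have hKmeas : AEStronglyMeasurable
      (fun q : (Ed d × Ed d) × J => weylKernel ε lam A (φ q.2) q.1.1 q.1.2)
      (volume.prod m) :=
    aestronglyMeasurable_of_forall_continuous (fun j => continuous_weylKernel lam ε hA (φ j)) _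
  have hφmeas : AEStronglyMeasurable (fun q : (Ed d × Ed d) × J => φ q.2 q.1)
      (volume.prod m) :=
    aestronglyMeasurable_of_forall_continuous (fun j => (φ j).continuous) _
  rw [memLp_two_iff_integrable_sq_norm hKmeas, memLp_two_iff_integrable_sq_norm hφmeas,
    integrable_prod_iff' (by exact hKmeas.norm.pow 2),
    integrable_prod_iff' (by exact hφmeas.norm.pow 2)]
  refine and_congr (iff_of_true (.of_forall fun j => ?_) (.of_forall fun j => ?_)) ?_
  · exact (memLp_weylKernel hε lam hA (φ j)).integrable_norm_pow two_ne_zero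
  · exact ((φ j).memLp 2 (volume : Measure (Ed d × Ed d))).integrable_norm_pow two_ne_zero
  · simp only [norm_pow, norm_norm, integral_norm_sq_weylKernel hε lam A]
    exact integrable_const_mul_iff (weylConst_ne_zero d hε).isUnit _

theorem integral_inner_weylKernel_family (hε : ε ≠ 0) (lam : ℝ) (hA : Continuous A)
    (hφ : MemLp (fun q : (Ed d × Ed d) × J => φ q.2 q.1) 2 (volume.prod m))
    (hψ : MemLp (fun q : (Ed d × Ed d) × J => ψ q.2 q.1) 2 (volume.prod m)) :
    ∫ q : (Ed d × Ed d) × J,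
        ⟪weylKernel ε lam A (φ q.2) q.1.1 q.1.2, weylKernel ε lam A (ψ q.2) q.1.1 q.1.2⟫_ℂ
        ∂volume.prod m =
      weylConst d ε *
        ∫ q : (Ed d × Ed d) × J, ⟪φ q.2 q.1, ψ q.2 q.1⟫_ℂ ∂volume.prod m := by
  have hK := integrable_inner_of_memLp_two (𝕜 := ℂ)
    ((memLp_weylKernel_family_iff hε lam hA φ).2 hφ)
    ((memLp_weylKernel_family_iff hε lam hA ψ).2 hψ)
  rw [integral_prod_symm _ hK, integral_prod_symm _ (integrable_inner_of_memLp_two hφ hψ),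
    ← integral_const_mul]
  exact integral_congr_ae (.of_forall fun j => integral_inner_weylKernel hε lam A (φ j) (ψ j))

end CountableFamilies

section WeylProduct

variable {d : ℕ} {ε : ℝ} (lam : ℝ) {A : Ed d → Ed d} {H H' H'' : Type*}
  [NormedAddCommGroup H] [NormedSpace ℂ H] [NormedAddCommGroup H'] [NormedSpace ℂ H']
  [NormedAddCommGroup H''] [NormedSpace ℂ H'']

/-- `p` is the magnetic Weyl product `f ♯ g`: its quantization is the composition of the
quantizations of `f` and `g`, tested on Schwartz functions. -/
def IsWeylProduct (ε lam : ℝ) (A : Ed d → Ed d) (f : Ed d × Ed d → H' →L[ℂ] H'')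
    (g : Ed d × Ed d → H →L[ℂ] H') (p : Ed d × Ed d → H →L[ℂ] H'') : Prop :=
  ∀ (Ψ : 𝓢(Ed d, H)) (x : Ed d), opA ε lam A p Ψ x = opA ε lam A f (opA ε lam A g Ψ) x

/-- The kernel of the quantization of `p` is the composition of the kernels of `f` and `g`. -/
def HasProductKernel (ε lam : ℝ) (A : Ed d → Ed d) (f : Ed d × Ed d → H' →L[ℂ] H'')
    (g : Ed d × Ed d → H →L[ℂ] H') (p : Ed d × Ed d → H →L[ℂ] H'') : Prop :=
  ∀ x y, weylKernel ε lam A p x y =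
    ∫ z, (weylKernel ε lam A f x z).comp (weylKernel ε lam A g z y)

lemma opA_eq_integral_weylKernel (ε : ℝ) (A : Ed d → Ed d) (u : 𝓢(Ed d × Ed d, H →L[ℂ] H'))
    (Ψ : Ed d → H) (x : Ed d) :
    opA ε lam A u Ψ x = ∫ y, weylKernel ε lam A u x y (Ψ y) := by
  rw [opA, ← integral_smul]
  refine integral_congr_ae (.of_forall fun y => ?_)
  beta_reduce
  rw [weylKernel, smul_apply,
    ContinuousLinearMap.integral_apply (integrable_weylKernel_integrand ε lam A u x y)]
  rfl

lemma continuous_weylKernel_right (ε : ℝ) (hA : Continuous A) {E : Type*} [NormedAddCommGroup E]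
    [NormedSpace ℂ E] (u : 𝓢(Ed d × Ed d, E)) (x : Ed d) :
    Continuous fun y => weylKernel ε lam A u x y :=
  Continuous.uncurry_left (f := weylKernel ε lam A u) x (continuous_weylKernel lam ε hA u)

lemma continuous_weylKernel_left (ε : ℝ) (hA : Continuous A) {E : Type*} [NormedAddCommGroup E]
    [NormedSpace ℂ E] (u : 𝓢(Ed d × Ed d, E)) (y : Ed d) :
    Continuous fun x => weylKernel ε lam A u x y :=
  Continuous.uncurry_right (f := weylKernel ε lam A u) y (continuous_weylKernel lam ε hA u)

lemma integrable_weylKernel_apply (ε : ℝ) (hA : Continuous A) (u : 𝓢(Ed d × Ed d, H →L[ℂ] H'))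
    (Ψ : 𝓢(Ed d, H)) (x : Ed d) : Integrable fun y => weylKernel ε lam A u x y (Ψ y) := by
  obtain ⟨C, hC⟩ := exists_norm_weylKernel_le lam ε A u
  refine (Ψ.integrable.norm.const_mul C).mono' ((continuous_weylKernel_right lam ε hA u x).clm_apply
    Ψ.continuous).aestronglyMeasurable (.of_forall fun y => ?_)
  exact ContinuousLinearMap.le_of_opNorm_le _ (hC x y) _

variable (f : 𝓢(Ed d × Ed d, H' →L[ℂ] H'')) (g : 𝓢(Ed d × Ed d, H →L[ℂ] H'))

lemma exists_integrable_norm_weylKernel_comp_le (hε : ε ≠ 0) (hA : Continuous A) (x : Ed d) :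
    ∃ k : Ed d → ℝ, Integrable k ∧
      ∀ y z, ‖(weylKernel ε lam A f x z).comp (weylKernel ε lam A g z y)‖ ≤ k z := by
  obtain ⟨C, hC⟩ := exists_norm_weylKernel_le lam ε A g
  refine ⟨fun z => ‖weylKernel ε lam A f x z‖ * C,
    (integrable_weylKernel lam hε hA f x).norm.mul_const C, fun y z => ?_⟩
  exact (ContinuousLinearMap.opNorm_comp_le _ _).trans
    (mul_le_mul_of_nonneg_left (hC z y) (norm_nonneg _))

lemma integrable_weylKernel_comp (hε : ε ≠ 0) (hA : Continuous A) (x y : Ed d) :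
    Integrable fun z => (weylKernel ε lam A f x z).comp (weylKernel ε lam A g z y) := by
  obtain ⟨k, hk, hle⟩ := exists_integrable_norm_weylKernel_comp_le lam f g hε hA x
  exact hk.mono' ((continuous_weylKernel_right lam ε hA f x).clm_comp
    (continuous_weylKernel_left lam ε hA g y)).aestronglyMeasurable (.of_forall (hle y))

lemma continuous_integral_weylKernel_comp (hε : ε ≠ 0) (hA : Continuous A) (x : Ed d) :
    Continuous fun y => ∫ z, (weylKernel ε lam A f x z).comp (weylKernel ε lam A g z y) := by
  obtain ⟨k, hk, hle⟩ := exists_integrable_norm_weylKernel_comp_le lam f g hε hA x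
  exact continuous_of_dominated
    (fun y => (integrable_weylKernel_comp lam f g hε hA x y).aestronglyMeasurable)
    (fun y => .of_forall (hle y)) hk (.of_forall fun z =>
      continuous_const.clm_comp (continuous_weylKernel_right lam ε hA g z))

variable [CompleteSpace H'']

lemma opA_opA_eq_integral [CompleteSpace H'] (hε : ε ≠ 0) (hA : Continuous A) (Ψ : 𝓢(Ed d, H))
    (x : Ed d) :
    opA ε lam A f (opA ε lam A g Ψ) x =
      ∫ y, (∫ z, (weylKernel ε lam A f x z).comp (weylKernel ε lam A g z y)) (Ψ y) := by
  obtain ⟨k, hk, hle⟩ := exists_integrable_norm_weylKernel_comp_le lam f g hε hA x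
  have hint : Integrable (fun q : Ed d × Ed d =>
      (weylKernel ε lam A f x q.1).comp (weylKernel ε lam A g q.1 q.2) (Ψ q.2))
      (volume.prod volume) := by
    refine (hk.mul_prod Ψ.integrable.norm).mono' (Continuous.aestronglyMeasurable ?_)
      (.of_forall fun q => ?_)
    · exact (((continuous_weylKernel_right lam ε hA f x).comp continuous_fst).clm_comp
        (continuous_weylKernel lam ε hA g)).clm_apply (Ψ.continuous.comp continuous_snd)
    · exact ContinuousLinearMap.le_of_opNorm_le _ (hle q.2 q.1) _
  calc opA ε lam A f (opA ε lam A g Ψ) x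
      = ∫ z, ∫ y, (weylKernel ε lam A f x z).comp (weylKernel ε lam A g z y) (Ψ y) := by
        simp only [opA_eq_integral_weylKernel,
          ← ContinuousLinearMap.integral_comp_comm _ (integrable_weylKernel_apply lam ε hA g Ψ _),
          ContinuousLinearMap.comp_apply]
    _ = ∫ y, ∫ z, (weylKernel ε lam A f x z).comp (weylKernel ε lam A g z y) (Ψ y) :=
        integral_integral_swap hint
    _ = ∫ y, (∫ z, (weylKernel ε lam A f x z).comp (weylKernel ε lam A g z y)) (Ψ y) := by
        simp only [ContinuousLinearMap.integral_apply
          (integrable_weylKernel_comp lam f g hε hA x _)]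

lemma eq_of_integral_apply_schwartz_eq {k l : Ed d → H →L[ℂ] H''} (hk : Continuous k)
    (hl : Continuous l) (hkl : ∀ Ψ : 𝓢(Ed d, H), ∫ y, k y (Ψ y) = ∫ y, l y (Ψ y)) : k = l := by
  funext y
  ext v
  refine congrFun ((Continuous.ae_eq_iff_eq volume (hk.clm_apply continuous_const)
    (hl.clm_apply continuous_const)).1 ?_) y
  refine ae_eq_of_integral_contDiff_smul_eq
    (hk.clm_apply continuous_const).locallyIntegrable
    (hl.clm_apply continuous_const).locallyIntegrable fun φ hφ hφc => ?_
  let Ψ : 𝓢(Ed d, H) := HasCompactSupport.toSchwartzMap (f := fun y => φ y • v)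
    hφc.smul_right (hφ.smul contDiff_const)
  have hΨ (m : Ed d → H →L[ℂ] H'') (z : Ed d) : m z (Ψ z) = φ z • m z v :=
    map_real_smul (m z) (m z).continuous (φ z) v
  simpa only [hΨ] using hkl Ψ

theorem IsWeylProduct.hasProductKernel [CompleteSpace H']
    {p : 𝓢(Ed d × Ed d, H →L[ℂ] H'')} {lam : ℝ}
    {f : 𝓢(Ed d × Ed d, H' →L[ℂ] H'')} {g : 𝓢(Ed d × Ed d, H →L[ℂ] H')} (hε : ε ≠ 0)
    (hA : Continuous A) (hp : IsWeylProduct ε lam A f g p) : HasProductKernel ε lam A f g p := by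
  intro x
  refine congrFun (eq_of_integral_apply_schwartz_eq (continuous_weylKernel_right lam ε hA p x)
    (continuous_integral_weylKernel_comp lam f g hε hA x) fun Ψ => ?_)
  rw [← opA_eq_integral_weylKernel, hp Ψ x, opA_opA_eq_integral lam f g hε hA]

lemma HasProductKernel.unique {lam : ℝ} {f : Ed d × Ed d → H' →L[ℂ] H''}
    {g : Ed d × Ed d → H →L[ℂ] H'} {p q : 𝓢(Ed d × Ed d, H →L[ℂ] H'')} (hε : ε ≠ 0)
    (hp : HasProductKernel ε lam A f g p) (hq : HasProductKernel ε lam A f g q) : p = q :=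
  weylKernel_injective lam hε A (funext₂ fun x y => (hp x y).trans (hq x y).symm)

end WeylProduct

section Adjoint

variable {d : ℕ} {ε lam : ℝ} {A : Ed d → Ed d} {H H' H'' : Type*}
  [NormedAddCommGroup H] [InnerProductSpace ℂ H] [CompleteSpace H]
  [NormedAddCommGroup H'] [InnerProductSpace ℂ H'] [CompleteSpace H']
  [NormedAddCommGroup H''] [InnerProductSpace ℂ H''] [CompleteSpace H'']

/-- The pointwise adjoint `u*` of an operator-valued Schwartz function. The adjoint is only
conjugate-linear over `ℂ`, so it is postcomposed as a real-linear map. -/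
def adjointSchwartz (u : 𝓢(Ed d × Ed d, H →L[ℂ] H')) : 𝓢(Ed d × Ed d, H' →L[ℂ] H) :=
  SchwartzMap.postcompCLM (𝕜 := ℝ)
    (AddMonoidHom.toRealLinearMap
      ((ContinuousLinearMap.adjoint : (H →L[ℂ] H') ≃ₗᵢ⋆[ℂ] _) : (H →L[ℂ] H') →+ (H' →L[ℂ] H))
      ContinuousLinearMap.adjoint.continuous) u

lemma adjointSchwartz_adjointSchwartz (u : 𝓢(Ed d × Ed d, H →L[ℂ] H')) :
    adjointSchwartz (adjointSchwartz u) = u :=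
  SchwartzMap.ext fun X => ContinuousLinearMap.adjoint_adjoint (u X)

lemma weylKernel_adjointSchwartz (u : 𝓢(Ed d × Ed d, H →L[ℂ] H')) (x y : Ed d) :
    weylKernel ε lam A (adjointSchwartz u) x y =
      ContinuousLinearMap.adjoint (weylKernel ε lam A u y x) :=
  weylKernel_conjLinear_comp lam
    ((ContinuousLinearMap.adjoint : (H →L[ℂ] H') ≃ₗᵢ⋆[ℂ] _).toContinuousLinearEquiv :
      (H →L[ℂ] H') →L⋆[ℂ] (H' →L[ℂ] H)) ε A u x y

lemma HasProductKernel.adjoint {f : 𝓢(Ed d × Ed d, H' →L[ℂ] H'')}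
    {g : 𝓢(Ed d × Ed d, H →L[ℂ] H')} {p : 𝓢(Ed d × Ed d, H →L[ℂ] H'')} (hε : ε ≠ 0)
    (hA : Continuous A) (hp : HasProductKernel ε lam A f g p) :
    HasProductKernel ε lam A (adjointSchwartz g) (adjointSchwartz f) (adjointSchwartz p) := by
  intro x y
  have hcomm := ContinuousLinearMap.integral_comp_commSL (by simp)
    ((ContinuousLinearMap.adjoint : (H →L[ℂ] H'') ≃ₗᵢ⋆[ℂ] _).toContinuousLinearEquiv :
      (H →L[ℂ] H'') →L⋆[ℂ] (H'' →L[ℂ] H)) (integrable_weylKernel_comp lam f g hε hA y x)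
  simp only [weylKernel_adjointSchwartz, hp y x, ← ContinuousLinearMap.adjoint_comp]
  exact hcomm.symm

end Adjoint

section TraceBasis

variable {H H' : Type*} [NormedAddCommGroup H] [InnerProductSpace ℂ H] [CompleteSpace H]
  [NormedAddCommGroup H'] [InnerProductSpace ℂ H'] [CompleteSpace H']

variable (H) in
/-- The index set of the Hilbert basis in which `trH` computes the trace; as a measure space it
carries the counting measure. -/
def TraceIndex : Type _ := (exists_hilbertBasis ℂ H).choose

instance : MeasureSpace (TraceIndex H) where
  toMeasurableSpace := ⊤
  volume := @Measure.count _ ⊤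

instance : DiscreteMeasurableSpace (TraceIndex H) := ⟨fun _ => trivial⟩

variable (H) in
/-- The Hilbert basis in which `trH` computes the trace. -/
def traceBasis : HilbertBasis (TraceIndex H) ℂ H := (exists_hilbertBasis ℂ H).choose_spec.choose

instance [TopologicalSpace.SeparableSpace H] : Countable (TraceIndex H) :=
  orthonormal_countable (traceBasis H).orthonormal

instance [TopologicalSpace.SeparableSpace H] : SigmaFinite (volume : Measure (TraceIndex H)) :=
  Measure.count.instSigmaFinite

lemma lintegral_traceIndex (a : TraceIndex H → ℝ≥0∞) : ∫⁻ i, a i = ∑' i, a i :=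
  lintegral_count a

lemma integrable_traceIndex_iff {a : TraceIndex H → ℂ} : Integrable a ↔ Summable a :=
  integrable_count_iff.trans summable_norm_iff

lemma integral_traceIndex [TopologicalSpace.SeparableSpace H] {a : TraceIndex H → ℂ}
    (ha : Integrable a) : ∫ i, a i = ∑' i, a i := by
  refine (integral_countable ha).trans (tsum_congr fun i => ?_)
  change (Measure.count : Measure (TraceIndex H)).real {i} • a i = a i
  rw [measureReal_def, Measure.count_singleton, ENNReal.toReal_one, one_smul]

lemma hasSum_inner_map_mul_inner (T : H →L[ℂ] H') (v : H') (w : H) :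
    HasSum (fun i => ⟪v, T (traceBasis H i)⟫_ℂ * ⟪traceBasis H i, w⟫_ℂ) ⟪v, T w⟫_ℂ := by
  simpa only [ContinuousLinearMap.adjoint_inner_left] using
    (traceBasis H).hasSum_inner_mul_inner (ContinuousLinearMap.adjoint T v) w

lemma integral_inner_map_mul_inner [TopologicalSpace.SeparableSpace H] (T : H →L[ℂ] H') (v : H')
    (w : H) :
    ∫ i, ⟪v, T (traceBasis H i)⟫_ℂ * ⟪traceBasis H i, w⟫_ℂ = ⟪v, T w⟫_ℂ := by
  have hsum := hasSum_inner_map_mul_inner T v w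
  rw [integral_traceIndex (integrable_traceIndex_iff.2 hsum.summable), hsum.tsum_eq]

/-- The entries of the matrix of `T` in the bases `traceBasis`. -/
def matrixElement (ji : TraceIndex H' × TraceIndex H) : (H →L[ℂ] H') →L[ℂ] ℂ :=
  (innerSL ℂ (traceBasis H' ji.1)).comp (ContinuousLinearMap.apply ℂ H' (traceBasis H ji.2))

lemma matrixElement_apply (ji : TraceIndex H' × TraceIndex H) (T : H →L[ℂ] H') :
    matrixElement ji T = ⟪traceBasis H' ji.1, T (traceBasis H ji.2)⟫_ℂ := rfl

lemma matrixElement_adjoint (ji : TraceIndex H' × TraceIndex H) (T : H →L[ℂ] H') :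
    matrixElement ji.swap (ContinuousLinearMap.adjoint T) = star (matrixElement ji T) := by
  simp only [matrixElement_apply, ContinuousLinearMap.adjoint_inner_right, Prod.fst_swap,
    Prod.snd_swap]
  exact (inner_conj_symm _ _).symm

variable [TopologicalSpace.SeparableSpace H] [TopologicalSpace.SeparableSpace H']

lemma lintegral_enorm_matrixElement_sq_le (T : H →L[ℂ] H') :
    ∫⁻ ji : TraceIndex H' × TraceIndex H, ‖matrixElement ji T‖ₑ ^ 2 ≤ hilbertSchmidtNormSq T := by
  have hmeas : Measurable fun ji : TraceIndex H' × TraceIndex H => ‖matrixElement ji T‖ₑ ^ 2 :=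
    .of_discrete
  calc ∫⁻ ji : TraceIndex H' × TraceIndex H, ‖matrixElement ji T‖ₑ ^ 2
      = ∫⁻ i, ∫⁻ j, ‖matrixElement (j, i) T‖ₑ ^ 2 := lintegral_prod_symm _ hmeas.aemeasurable
    _ = ∑' i, ‖T (traceBasis H i)‖ₑ ^ 2 := by
        simp only [lintegral_traceIndex, matrixElement_apply, hilbertBasis_tsum_enorm_inner_sq]
    _ ≤ hilbertSchmidtNormSq T :=
        tsum_enorm_sq_le_hilbertSchmidtNormSq T (traceBasis H).orthonormal

lemma integral_inner_matrixElement {S T : H →L[ℂ] H'}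
    (hST : Integrable fun ji : TraceIndex H' × TraceIndex H =>
      ⟪matrixElement ji S, matrixElement ji T⟫_ℂ) :
    ∫ ji : TraceIndex H' × TraceIndex H, ⟪matrixElement ji S, matrixElement ji T⟫_ℂ =
      trH ((ContinuousLinearMap.adjoint S).comp T) := by
  have hcolumn (i : TraceIndex H) : ∫ j, ⟪matrixElement (j, i) S, matrixElement (j, i) T⟫_ℂ =
      ⟪traceBasis H i, (ContinuousLinearMap.adjoint S).comp T (traceBasis H i)⟫_ℂ := by
    rw [ContinuousLinearMap.comp_apply, ContinuousLinearMap.adjoint_inner_right]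
    have hparseval := integral_inner_map_mul_inner (ContinuousLinearMap.id ℂ H')
      (S (traceBasis H i)) (T (traceBasis H i))
    simpa only [ContinuousLinearMap.id_apply, RCLike.inner_apply', matrixElement_apply,
      inner_conj_symm] using hparseval
  rw [Measure.volume_eq_prod] at hST ⊢
  rw [integral_prod_symm _ hST, integral_traceIndex hST.integral_prod_right]
  exact tsum_congr hcolumn

end TraceBasis

section MatrixKernel

variable {d : ℕ} {ε lam : ℝ} {A : Ed d → Ed d} {H H' H'' : Type*}
  [NormedAddCommGroup H] [InnerProductSpace ℂ H] [CompleteSpace H]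
  [NormedAddCommGroup H'] [InnerProductSpace ℂ H'] [CompleteSpace H']
  [NormedAddCommGroup H''] [InnerProductSpace ℂ H''] [CompleteSpace H'']

/-- The matrix elements of an operator-valued Schwartz function in the bases `traceBasis`. -/
def matrixSymbol (u : 𝓢(Ed d × Ed d, H →L[ℂ] H')) (ji : TraceIndex H' × TraceIndex H) :
    𝓢(Ed d × Ed d, ℂ) :=
  SchwartzMap.postcompCLM (𝕜 := ℝ) ((matrixElement ji).restrictScalars ℝ) u

/-- The Weyl kernel of `u` with its matrix indices treated as further variables: a scalar kernel
from `Ed d × TraceIndex H` to `Ed d × TraceIndex H'`. -/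
def matrixKernel (ε lam : ℝ) (A : Ed d → Ed d) (u : Ed d × Ed d → H →L[ℂ] H')
    (q : (Ed d × TraceIndex H') × (Ed d × TraceIndex H)) : ℂ :=
  matrixElement (q.1.2, q.2.2) (weylKernel ε lam A u q.1.1 q.2.1)

lemma matrixKernel_eq_weylKernel_matrixSymbol (u : 𝓢(Ed d × Ed d, H →L[ℂ] H'))
    (q : (Ed d × TraceIndex H') × (Ed d × TraceIndex H)) :
    matrixKernel ε lam A u q =
      weylKernel ε lam A (matrixSymbol u (prodMiddleComm _ _ _ _ q).2)
        (prodMiddleComm _ _ _ _ q).1.1 (prodMiddleComm _ _ _ _ q).1.2 :=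
  (weylKernel_continuousLinearMap_comp lam (matrixElement (q.1.2, q.2.2)) ε A u q.1.1 q.2.1).symm

lemma matrixKernel_adjointSchwartz (u : 𝓢(Ed d × Ed d, H →L[ℂ] H'))
    (q : (Ed d × TraceIndex H) × (Ed d × TraceIndex H')) :
    matrixKernel ε lam A (adjointSchwartz u) q = star (matrixKernel ε lam A u q.swap) := by
  rw [matrixKernel, weylKernel_adjointSchwartz]
  exact matrixElement_adjoint (q.2.2, q.1.2) _

variable [TopologicalSpace.SeparableSpace H] [TopologicalSpace.SeparableSpace H']

theorem memLp_matrixKernel_iff (hε : ε ≠ 0) (hA : Continuous A)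
    (u : 𝓢(Ed d × Ed d, H →L[ℂ] H')) :
    MemLp (matrixKernel ε lam A u) 2 ↔
      MemLp (fun q : (Ed d × Ed d) × (TraceIndex H' × TraceIndex H) => matrixSymbol u q.2 q.1) 2
        := by
  have hmap := (prodMiddleComm (Ed d) (TraceIndex H') (Ed d)
    (TraceIndex H)).memLp_map_measure_iff (μ := volume) (p := 2)
    (g := fun q => weylKernel ε lam A (matrixSymbol u q.2) q.1.1 q.1.2)
  rw [volume_preserving_prodMiddleComm.map_eq] at hmap
  rw [funext (matrixKernel_eq_weylKernel_matrixSymbol u)]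
  exact hmap.symm.trans (memLp_weylKernel_family_iff hε lam hA (matrixSymbol u))

lemma IsHilbertSchmidtL2.memLp_matrixSymbol {u : 𝓢(Ed d × Ed d, H →L[ℂ] H')}
    (hu : IsHilbertSchmidtL2 u) :
    MemLp (fun q : (Ed d × Ed d) × (TraceIndex H' × TraceIndex H) => matrixSymbol u q.2 q.1) 2
      := by
  have hmeas : AEStronglyMeasurable
      (fun q : (Ed d × Ed d) × (TraceIndex H' × TraceIndex H) => matrixSymbol u q.2 q.1) :=
    aestronglyMeasurable_of_forall_continuous (fun ji => (matrixSymbol u ji).continuous) _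
  refine (memLp_two_iff_integrable_sq_norm hmeas).2 ⟨hmeas.norm.pow 2, ?_⟩
  calc ∫⁻ q : (Ed d × Ed d) × (TraceIndex H' × TraceIndex H), ‖‖matrixSymbol u q.2 q.1‖ ^ 2‖ₑ
      = ∫⁻ q : (Ed d × Ed d) × (TraceIndex H' × TraceIndex H), ‖matrixSymbol u q.2 q.1‖ₑ ^ 2 := by
        simp only [enorm_pow, enorm_norm]
    _ = ∫⁻ X, ∫⁻ ji, ‖matrixSymbol u ji X‖ₑ ^ 2 := lintegral_prod _ (hmeas.enorm.pow_const 2)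
    _ ≤ ∫⁻ X, hilbertSchmidtNormSq (u X) :=
        lintegral_mono fun X => lintegral_enorm_matrixElement_sq_le (u X)
    _ < ⊤ := hu

lemma IsHilbertSchmidtL2.memLp_matrixKernel {u : 𝓢(Ed d × Ed d, H →L[ℂ] H')}
    (hu : IsHilbertSchmidtL2 u) (hε : ε ≠ 0) (hA : Continuous A) :
    MemLp (matrixKernel ε lam A u) 2 :=
  (memLp_matrixKernel_iff hε hA u).2 hu.memLp_matrixSymbol

lemma memLp_matrixKernel_adjointSchwartz {u : 𝓢(Ed d × Ed d, H →L[ℂ] H')}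
    (hu : MemLp (matrixKernel ε lam A u) 2) :
    MemLp (matrixKernel ε lam A (adjointSchwartz u)) 2 := by
  rw [funext (matrixKernel_adjointSchwartz u)]
  exact (hu.comp_measurePreserving Measure.measurePreserving_swap).star

variable [TopologicalSpace.SeparableSpace H'']

theorem HasProductKernel.matrixKernel_ae_eq {f : 𝓢(Ed d × Ed d, H' →L[ℂ] H'')}
    {g : 𝓢(Ed d × Ed d, H →L[ℂ] H')} {p : Ed d × Ed d → H →L[ℂ] H''}
    (hp : HasProductKernel ε lam A f g p) (hε : ε ≠ 0) (hA : Continuous A)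
    (hf : MemLp (matrixKernel ε lam A f) 2) (hg : MemLp (matrixKernel ε lam A g) 2) :
    matrixKernel ε lam A p =ᵐ[volume]
      kernelComp volume (matrixKernel ε lam A f) (matrixKernel ε lam A g) := by
  filter_upwards [ae_memLp_two_sections hf hg] with q hq
  have hint := integrable_weylKernel_comp lam f g hε hA q.1.1 q.2.1
  calc matrixKernel ε lam A p q
      = ∫ z, matrixElement (q.1.2, q.2.2)
          ((weylKernel ε lam A f q.1.1 z).comp (weylKernel ε lam A g z q.2.1)) := by
        rw [matrixKernel, hp, ContinuousLinearMap.integral_comp_comm _ hint]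
    _ = ∫ z, ∫ k, matrixKernel ε lam A f (q.1, (z, k)) * matrixKernel ε lam A g ((z, k), q.2) :=
        integral_congr_ae (.of_forall fun z => (integral_inner_map_mul_inner
          (weylKernel ε lam A f q.1.1 z) _ (weylKernel ε lam A g z q.2.1 _)).symm)
    _ = kernelComp volume (matrixKernel ε lam A f) (matrixKernel ε lam A g) q :=
        (integral_prod _ (hq.1.integrable_mul hq.2)).symm

lemma HasProductKernel.memLp_matrixKernel {f : 𝓢(Ed d × Ed d, H' →L[ℂ] H'')}
    {g : 𝓢(Ed d × Ed d, H →L[ℂ] H')} {p : Ed d × Ed d → H →L[ℂ] H''}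
    (hp : HasProductKernel ε lam A f g p) (hε : ε ≠ 0) (hA : Continuous A)
    (hf : MemLp (matrixKernel ε lam A f) 2) (hg : MemLp (matrixKernel ε lam A g) 2) :
    MemLp (matrixKernel ε lam A p) 2 :=
  (memLp_congr_ae (hp.matrixKernel_ae_eq hε hA hf hg)).2 (memLp_kernelComp hf hg)

end MatrixKernel

section Pairing

variable {d : ℕ} {ε lam : ℝ} {A : Ed d → Ed d} {H H' H'' : Type*}
  [NormedAddCommGroup H] [InnerProductSpace ℂ H] [CompleteSpace H]
  [NormedAddCommGroup H'] [InnerProductSpace ℂ H'] [CompleteSpace H']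
  [NormedAddCommGroup H''] [InnerProductSpace ℂ H''] [CompleteSpace H'']

lemma star_trH (T : H →L[ℂ] H) : star (trH T) = trH (ContinuousLinearMap.adjoint T) := by
  rw [trH, trH, tsum_star]
  refine tsum_congr fun i => ?_
  rw [ContinuousLinearMap.adjoint_inner_right]
  exact inner_conj_symm _ _

lemma star_tcPair (u v : Ed d × Ed d → H →L[ℂ] H') : star (tcPair u v) = tcPair v u := by
  refine (integral_conj (𝕜 := ℂ)).symm.trans (integral_congr_ae (.of_forall fun X => ?_))
  refine (star_trH _).trans ?_
  rw [ContinuousLinearMap.adjoint_comp, ContinuousLinearMap.adjoint_adjoint]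
variable [TopologicalSpace.SeparableSpace H] [TopologicalSpace.SeparableSpace H']

lemma tcPair_eq_integral_matrixSymbol {u v : 𝓢(Ed d × Ed d, H →L[ℂ] H')}
    (huv : Integrable fun q : (Ed d × Ed d) × (TraceIndex H' × TraceIndex H) =>
      ⟪matrixSymbol u q.2 q.1, matrixSymbol v q.2 q.1⟫_ℂ) :
    tcPair u v = ∫ q : (Ed d × Ed d) × (TraceIndex H' × TraceIndex H),
      ⟪matrixSymbol u q.2 q.1, matrixSymbol v q.2 q.1⟫_ℂ := by
  rw [Measure.volume_eq_prod] at huv ⊢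
  rw [integral_prod _ huv]
  refine integral_congr_ae ?_
  filter_upwards [huv.prod_right_ae] with X hX
  exact (integral_inner_matrixElement hX).symm

theorem integral_inner_matrixKernel (hε : ε ≠ 0) (hA : Continuous A)
    {u v : 𝓢(Ed d × Ed d, H →L[ℂ] H')} (hu : MemLp (matrixKernel ε lam A u) 2)
    (hv : MemLp (matrixKernel ε lam A v) 2) :
    ∫ q, ⟪matrixKernel ε lam A u q, matrixKernel ε lam A v q⟫_ℂ = weylConst d ε * tcPair u v := by
  have husymbol := (memLp_matrixKernel_iff hε hA u).1 hu
  have hvsymbol := (memLp_matrixKernel_iff hε hA v).1 hv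
  rw [tcPair_eq_integral_matrixSymbol (integrable_inner_of_memLp_two husymbol hvsymbol)]
  simp only [matrixKernel_eq_weylKernel_matrixSymbol]
  exact (volume_preserving_prodMiddleComm.integral_comp'
    (fun q => ⟪weylKernel ε lam A (matrixSymbol u q.2)
      q.1.1 q.1.2, weylKernel ε lam A (matrixSymbol v q.2) q.1.1 q.1.2⟫_ℂ)).trans
    (integral_inner_weylKernel_family hε lam hA husymbol hvsymbol)

lemma tcPair_adjointSchwartz (hε : ε ≠ 0) (hA : Continuous A)
    {u v : 𝓢(Ed d × Ed d, H →L[ℂ] H')} (hu : MemLp (matrixKernel ε lam A u) 2)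
    (hv : MemLp (matrixKernel ε lam A v) 2) :
    tcPair (adjointSchwartz u) (adjointSchwartz v) = tcPair v u := by
  refine mul_left_cancel₀ (Complex.ofReal_ne_zero.2 (weylConst_ne_zero d hε)) ?_
  calc weylConst d ε * tcPair (adjointSchwartz u) (adjointSchwartz v)
      = ∫ q, ⟪matrixKernel ε lam A (adjointSchwartz u) q,
          matrixKernel ε lam A (adjointSchwartz v) q⟫_ℂ :=
        (integral_inner_matrixKernel hε hA (memLp_matrixKernel_adjointSchwartz hu)
          (memLp_matrixKernel_adjointSchwartz hv)).symm
    _ = ∫ q : (Ed d × TraceIndex H) × (Ed d × TraceIndex H'),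
          ⟪matrixKernel ε lam A v q.swap, matrixKernel ε lam A u q.swap⟫_ℂ := by
        simp only [matrixKernel_adjointSchwartz, RCLike.inner_apply', RCLike.star_def,
          RCLike.conj_conj, mul_comm]
    _ = ∫ q, ⟪matrixKernel ε lam A v q, matrixKernel ε lam A u q⟫_ℂ :=
        integral_prod_swap fun q => ⟪matrixKernel ε lam A v q, matrixKernel ε lam A u q⟫_ℂ
    _ = weylConst d ε * tcPair v u := integral_inner_matrixKernel hε hA hv hu

variable [TopologicalSpace.SeparableSpace H'']

variable {f : 𝓢(Ed d × Ed d, H' →L[ℂ] H'')} {g : 𝓢(Ed d × Ed d, H →L[ℂ] H')}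
  {h p : 𝓢(Ed d × Ed d, H →L[ℂ] H'')}

theorem HasProductKernel.tcPair_eq_right {q : 𝓢(Ed d × Ed d, H' →L[ℂ] H'')}
    (hp : HasProductKernel ε lam A f g p) (hq : HasProductKernel ε lam A h (adjointSchwartz g) q)
    (hε : ε ≠ 0) (hA : Continuous A) (hf : MemLp (matrixKernel ε lam A f) 2)
    (hg : MemLp (matrixKernel ε lam A g) 2) (hh : MemLp (matrixKernel ε lam A h) 2) :
    tcPair p h = tcPair f q := by
  have hgadj := memLp_matrixKernel_adjointSchwartz hg
  have hKp := hp.matrixKernel_ae_eq hε hA hf hg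
  have hKq := hq.matrixKernel_ae_eq hε hA hh hgadj
  refine mul_left_cancel₀ (Complex.ofReal_ne_zero.2 (weylConst_ne_zero d hε)) ?_
  calc weylConst d ε * tcPair p h
      = ∫ r, ⟪matrixKernel ε lam A p r, matrixKernel ε lam A h r⟫_ℂ :=
        (integral_inner_matrixKernel hε hA (hp.memLp_matrixKernel hε hA hf hg) hh).symm
    _ = ∫ r, ⟪kernelComp volume (matrixKernel ε lam A f) (matrixKernel ε lam A g) r,
          matrixKernel ε lam A h r⟫_ℂ :=
        integral_congr_ae (hKp.mono fun r hr => by simp only [hr])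
    _ = ∫ r, ⟪matrixKernel ε lam A f r, kernelComp volume (matrixKernel ε lam A h)
          (matrixKernel ε lam A (adjointSchwartz g)) r⟫_ℂ := by
        rw [funext (matrixKernel_adjointSchwartz g)]
        exact integral_inner_kernelComp hf hg hh
    _ = ∫ r, ⟪matrixKernel ε lam A f r, matrixKernel ε lam A q r⟫_ℂ :=
        integral_congr_ae (hKq.mono fun r hr => by simp only [hr])
    _ = weylConst d ε * tcPair f q :=
        integral_inner_matrixKernel hε hA hf (hq.memLp_matrixKernel hε hA hh hgadj)

theorem HasProductKernel.tcPair_eq_left {q : 𝓢(Ed d × Ed d, H' →L[ℂ] H)}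
    (hp : HasProductKernel ε lam A f g p) (hq : HasProductKernel ε lam A (adjointSchwartz h) f q)
    (hε : ε ≠ 0) (hA : Continuous A) (hf : MemLp (matrixKernel ε lam A f) 2)
    (hg : MemLp (matrixKernel ε lam A g) 2) (hh : MemLp (matrixKernel ε lam A h) 2) :
    tcPair p h = tcPair g (adjointSchwartz q) := by
  have hhadj := memLp_matrixKernel_adjointSchwartz hh
  have hKp := hp.memLp_matrixKernel hε hA hf hg
  have hKq := memLp_matrixKernel_adjointSchwartz (hq.memLp_matrixKernel hε hA hhadj hf)
  have hadj : tcPair (adjointSchwartz p) (adjointSchwartz h) = tcPair (adjointSchwartz g) q :=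
    (hp.adjoint hε hA).tcPair_eq_right (by rwa [adjointSchwartz_adjointSchwartz]) hε hA
      (memLp_matrixKernel_adjointSchwartz hg) (memLp_matrixKernel_adjointSchwartz hf) hhadj
  have hq_pair := tcPair_adjointSchwartz hε hA hg hKq
  rw [adjointSchwartz_adjointSchwartz] at hq_pair
  calc tcPair p h = star (tcPair (adjointSchwartz p) (adjointSchwartz h)) := by
        rw [tcPair_adjointSchwartz hε hA hKp hh, star_tcPair]
    _ = tcPair g (adjointSchwartz q) := by rw [hadj, hq_pair, star_tcPair]

end Pairing

theorem statement_7_general {d : ℕ} {ε lam : ℝ} (hε : ε ≠ 0) {A : Ed d → Ed d}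
    (hA : Continuous A) {H H' H'' : Type*}
    [NormedAddCommGroup H] [InnerProductSpace ℂ H] [CompleteSpace H]
    [TopologicalSpace.SeparableSpace H]
    [NormedAddCommGroup H'] [InnerProductSpace ℂ H'] [CompleteSpace H']
    [TopologicalSpace.SeparableSpace H']
    [NormedAddCommGroup H''] [InnerProductSpace ℂ H''] [CompleteSpace H'']
    [TopologicalSpace.SeparableSpace H'']
    {f : 𝓢(Ed d × Ed d, H' →L[ℂ] H'')} {g : 𝓢(Ed d × Ed d, H →L[ℂ] H')}
    {h : 𝓢(Ed d × Ed d, H →L[ℂ] H'')}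
    (hf : IsHilbertSchmidtL2 f) (hg : IsHilbertSchmidtL2 g) (hh : IsHilbertSchmidtL2 h)
    {p₁ : 𝓢(Ed d × Ed d, H →L[ℂ] H'')} (hp₁ : IsWeylProduct ε lam A f g p₁)
    {p₂ : 𝓢(Ed d × Ed d, H' →L[ℂ] H'')} (hp₂ : IsWeylProduct ε lam A h (adjointSchwartz g) p₂)
    {p₃ : 𝓢(Ed d × Ed d, H'' →L[ℂ] H')} (hp₃ : IsWeylProduct ε lam A g (adjointSchwartz h) p₃)
    {p₄ : 𝓢(Ed d × Ed d, H →L[ℂ] H')} (hp₄ : IsWeylProduct ε lam A (adjointSchwartz f) h p₄)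
    {p₅ : 𝓢(Ed d × Ed d, H' →L[ℂ] H)} (hp₅ : IsWeylProduct ε lam A (adjointSchwartz h) f p₅) :
    (tcPair p₁ h = tcPair f p₂ ∧ tcPair f p₂ = tcPair f (adjointSchwartz p₃)) ∧
      (tcPair p₁ h = tcPair g p₄ ∧ tcPair g p₄ = tcPair g (adjointSchwartz p₅)) := by
  have hKf := hf.memLp_matrixKernel (lam := lam) hε hA
  have hKg := hg.memLp_matrixKernel (lam := lam) hε hA
  have hKh := hh.memLp_matrixKernel (lam := lam) hε hA
  have hk₁ := hp₁.hasProductKernel hε hA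
  have hk₂ := hp₂.hasProductKernel hε hA
  have hk₃ := hp₃.hasProductKernel hε hA
  have hk₄ := hp₄.hasProductKernel hε hA
  have hk₅ := hp₅.hasProductKernel hε hA
  have hp₂_eq : p₂ = adjointSchwartz p₃ :=
    hk₂.unique hε (adjointSchwartz_adjointSchwartz h ▸ hk₃.adjoint hε hA)
  have hp₄_eq : p₄ = adjointSchwartz p₅ :=
    hk₄.unique hε (adjointSchwartz_adjointSchwartz h ▸ hk₅.adjoint hε hA)
  refine ⟨⟨hk₁.tcPair_eq_right hk₂ hε hA hKf hKg hKh, by rw [hp₂_eq]⟩, ?_, by rw [hp₄_eq]⟩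
  rw [hp₄_eq]
  exact hk₁.tcPair_eq_left hk₅ hε hA hKf hKg hKh

theorem statement_7 {d : ℕ} (ε lam : ℝ) (hε : 0 < ε) (hlam : 0 < lam)
    {H H' H'' : Type*}
    [NormedAddCommGroup H] [InnerProductSpace ℂ H] [CompleteSpace H]
    [TopologicalSpace.SeparableSpace H]
    [NormedAddCommGroup H'] [InnerProductSpace ℂ H'] [CompleteSpace H']
    [TopologicalSpace.SeparableSpace H']
    [NormedAddCommGroup H''] [InnerProductSpace ℂ H''] [CompleteSpace H'']
    [TopologicalSpace.SeparableSpace H'']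
    (A : Ed d → Ed d) (hA : IsPolyVF A)
    (f : SchwartzMap (Ed d × Ed d) (H' →L[ℂ] H''))
    (g : SchwartzMap (Ed d × Ed d) (H →L[ℂ] H'))
    (h : SchwartzMap (Ed d × Ed d) (H →L[ℂ] H''))
    (hf : TCSchwartz f) (hg : TCSchwartz g) (hh : TCSchwartz h)
    -- p₁ = f ♯ g
    (p₁ : SchwartzMap (Ed d × Ed d) (H →L[ℂ] H''))
    (hp₁ : ∀ (Ψ : SchwartzMap (Ed d) H) (x : Ed d),
      opA ε lam A (⇑p₁) (⇑Ψ) x = opA ε lam A (⇑f) (opA ε lam A (⇑g) (⇑Ψ)) x)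
    -- p₂ = h ♯ g*
    (p₂ : SchwartzMap (Ed d × Ed d) (H' →L[ℂ] H''))
    (hp₂ : ∀ (Φ : SchwartzMap (Ed d) H') (x : Ed d),
      opA ε lam A (⇑p₂) (⇑Φ) x =
        opA ε lam A (⇑h) (opA ε lam A (fun X => ContinuousLinearMap.adjoint (g X)) (⇑Φ)) x)
    -- p₃ = g ♯ h*
    (p₃ : SchwartzMap (Ed d × Ed d) (H'' →L[ℂ] H'))
    (hp₃ : ∀ (Ξ : SchwartzMap (Ed d) H'') (x : Ed d),
      opA ε lam A (⇑p₃) (⇑Ξ) x =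
        opA ε lam A (⇑g) (opA ε lam A (fun X => ContinuousLinearMap.adjoint (h X)) (⇑Ξ)) x)
    -- p₄ = f* ♯ h
    (p₄ : SchwartzMap (Ed d × Ed d) (H →L[ℂ] H'))
    (hp₄ : ∀ (Ψ : SchwartzMap (Ed d) H) (x : Ed d),
      opA ε lam A (⇑p₄) (⇑Ψ) x =
        opA ε lam A (fun X => ContinuousLinearMap.adjoint (f X)) (opA ε lam A (⇑h) (⇑Ψ)) x)
    -- p₅ = h* ♯ f
    (p₅ : SchwartzMap (Ed d × Ed d) (H' →L[ℂ] H))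
    (hp₅ : ∀ (Φ : SchwartzMap (Ed d) H') (x : Ed d),
      opA ε lam A (⇑p₅) (⇑Φ) x =
        opA ε lam A (fun X => ContinuousLinearMap.adjoint (h X)) (opA ε lam A (⇑f) (⇑Φ)) x) :
    (tcPair (⇑p₁) (⇑h) = tcPair (⇑f) (⇑p₂) ∧
      tcPair (⇑f) (⇑p₂) = tcPair (⇑f) (fun X => ContinuousLinearMap.adjoint (p₃ X))) ∧
    (tcPair (⇑p₁) (⇑h) = tcPair (⇑g) (⇑p₄) ∧
      tcPair (⇑g) (⇑p₄) = tcPair (⇑g) (fun X => ContinuousLinearMap.adjoint (p₅ X))) :=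
  statement_7_general hε.ne' hA.1.continuous hf.isHilbertSchmidtL2 hg.isHilbertSchmidtL2
    hh.isHilbertSchmidtL2 hp₁ hp₂ hp₃ hp₄ hp₅

end
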